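/- arXiv:2011.02075 — 2 statements merged into one kernel-verified Lean document; each statement's English description precedes it below -/
import Mathlib

section
/- Let Δ ≥ 3 be an integer and b ∈ (0,1). Let μ be a Gibbs distribution of a q-spin system on an n-vertex graph G of maximum degree at most Δ, and assume μ is totally-connected and b-marginally bounded. Suppose there exist reals θ with 0 < θ ≤ b²/(12Δ) and C > 0 such that μ satisfies the ⌈θn⌉-uniform block factorization of entropy with constant C. Then μ satisfies the approximate tensorization of entropy with constant C₁ = (18·log(1/b)/b⁴)·C. -/
/-! Uniform block factorization bounds `Ent f` by the average of `μ[Ent_S f]` over blocks `S` of size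
`⌈θn⌉`, so it suffices to tensorize the entropy on such a sparse random block down to single sites.

* By the Markov property, `μ_S` is a product over the connected components of `G[S]`, and entropy
  is subadditive over non-adjacent pieces (`avgEnt_le_add_of_comp`, `expec_condDist_comp`). The
  block entropy is therefore at most the sum over the components of `S` (`le_sum_compIn`).
* On a component with `k` vertices a crude bound is enough. Each feasible configuration has
  conditional mass at least `b^k`, so entropy is at most `3 + 2k log(1/b)` times `Var √f`. Total
  connectedness joins any two feasible configurations by a path of single-site moves, and
  Cauchy–Schwarz along it bounds `Var √f` by single-site variances, hence by single-site entropies.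
  The resulting constant is `(3 + 2k log(1/b)) / b^(2k+1)` (`avgEnt_le_sum_resampleVar`).
* A fixed `k`-set lies in the random block with probability at most `(ℓ/n)(2θ)^(k-1)`, and the
  connected `k`-sets `U` containing a vertex satisfy `∑ (3Δ)^(-(|U|-1)) ≤ (1 + 1/Δ)^Δ ≤ 3`, which
  comes from exploring `U` vertex by vertex (`sum_connected_le`). Since `2θ ≤ b²/(6Δ)`, the
  probability beats the local constant, and the expected weight at a vertex is at most
  `(ℓ/n) · 21 log(1/b) / b³`, which is at most `(ℓ/n) · 18 log(1/b) / b⁴` when `b ≤ 1/2`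
  (`sum_weight_le`).

When `b > 1/2` no vertex has two feasible spins given the rest, so total connectedness leaves a
single feasible configuration and all entropies vanish.
-/

open Finset

attribute [local instance] Classical.propDecidable

noncomputable section

variable {V : Type} [Fintype V] [DecidableEq V] {q : ℕ}

/-- Probability that a sample from `μ` agrees with `τ` on `Λ`. -/
def prAgree (μ : (V → Fin q) → ℝ) (Λ : Finset V) (τ : V → Fin q) : ℝ :=
  ∑ σ : V → Fin q, if ∀ v ∈ Λ, σ v = τ v then μ σ else 0

/-- Conditional probability that `σ v = i` given that `σ` agrees with `τ` on `Λ`. -/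
def condProb (μ : (V → Fin q) → ℝ) (Λ : Finset V) (τ : V → Fin q) (v : V) (i : Fin q) : ℝ :=
  prAgree μ (insert v Λ) (Function.update τ v i) / prAgree μ Λ τ

/-- `μ` is `b`-marginally bounded: conditioned on any feasible boundary condition on a
proper subset `Λ` of the vertices, every feasible spin at any unassigned vertex has
conditional probability at least `b`. -/
def MarginallyBounded (μ : (V → Fin q) → ℝ) (b : ℝ) : Prop :=
  ∀ Λ : Finset V, Λ ≠ Finset.univ → ∀ τ : V → Fin q, 0 < prAgree μ Λ τ →
    ∀ v ∉ Λ, ∀ i : Fin q, 0 < condProb μ Λ τ v i → b ≤ condProb μ Λ τ v i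

/-- The index set of the influence matrix: pairs `(u,i)` with `u` unassigned and
spin `i` feasible at `u` given the boundary condition. -/
abbrev InfIdx (μ : (V → Fin q) → ℝ) (Λ : Finset V) (τ : V → Fin q) : Type :=
  {p : V × Fin q // p.1 ∉ Λ ∧ 0 < condProb μ Λ τ p.1 p.2}

/-- The influence matrix `Ψ^τ`. -/
def inflMatrix (μ : (V → Fin q) → ℝ) (Λ : Finset V) (τ : V → Fin q) :
    Matrix (InfIdx μ Λ τ) (InfIdx μ Λ τ) ℝ :=
  Matrix.of fun p r =>
    if p.1.1 = r.1.1 then 0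
    else condProb μ (insert p.1.1 Λ) (Function.update τ p.1.1 p.1.2) r.1.1 r.1.2
      - condProb μ Λ τ r.1.1 r.1.2

/-- `μ` is `η`-spectrally independent: every real eigenvalue of every influence matrix
`Ψ^τ` is at most `η`. -/
def SpectrallyIndependent (μ : (V → Fin q) → ℝ) (η : ℝ) : Prop :=
  ∀ Λ : Finset V, Λ ≠ Finset.univ → ∀ τ : V → Fin q, 0 < prAgree μ Λ τ →
    ∀ (t : ℝ) (x : InfIdx μ Λ τ → ℝ), x ≠ 0 →
      (inflMatrix μ Λ τ).mulVec x = t • x → t ≤ η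

/-- Two configurations are adjacent in the Hamming graph iff they differ at exactly one
vertex. -/
def HammingAdj (σ σ' : V → Fin q) : Prop := ∃! v : V, σ v ≠ σ' v

/-- `μ` is totally-connected: for every nonempty `S ⊆ V` and feasible boundary condition
`τ` on `V∖S`, the set of feasible configurations given `τ` is connected in the Hamming
graph (moving only through feasible configurations). -/
def TotallyConnected (μ : (V → Fin q) → ℝ) : Prop :=
  ∀ S : Finset V, S.Nonempty → ∀ τ : V → Fin q, 0 < prAgree μ Sᶜ τ →
    ∀ σ σ' : V → Fin q,
      0 < μ σ → (∀ v ∈ Sᶜ, σ v = τ v) →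
      0 < μ σ' → (∀ v ∈ Sᶜ, σ' v = τ v) →
      Relation.ReflTransGen
        (fun a b => HammingAdj a b ∧ 0 < μ b ∧ ∀ v ∈ Sᶜ, b v = τ v) σ σ'

/-- Expectation of `f` under `π`. -/
def expec (π f : (V → Fin q) → ℝ) : ℝ := ∑ σ, π σ * f σ

/-- Entropy `Ent_π(f) = π(f·log(f/π(f)))` (with the conventions `0·log 0 = 0` and
`log 0 = 0`, so that the entropy vanishes when `π(f) = 0`). -/
def entropy (π f : (V → Fin q) → ℝ) : ℝ :=
  ∑ σ, π σ * f σ * Real.log (f σ / expec π f)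

/-- Conditional distribution `μ_S^τ` on configurations agreeing with `τ` outside `S`. -/
def condDist (μ : (V → Fin q) → ℝ) (S : Finset V) (τ : V → Fin q) : (V → Fin q) → ℝ :=
  fun σ => (if ∀ v ∈ Sᶜ, σ v = τ v then μ σ else 0) / prAgree μ Sᶜ τ

/-- `μ[Ent_S(f)]`: the average over the boundary condition (distributed according to `μ`)
of the conditional entropy of `f` on `S`. -/
def avgEnt (μ : (V → Fin q) → ℝ) (S : Finset V) (f : (V → Fin q) → ℝ) : ℝ :=
  ∑ τ : V → Fin q, μ τ * entropy (condDist μ S τ) f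

/-- `μ` satisfies approximate tensorization of entropy with constant `C₁`. -/
def ApproxTensorization (μ : (V → Fin q) → ℝ) (C₁ : ℝ) : Prop :=
  ∀ f : (V → Fin q) → ℝ, (∀ σ, 0 ≤ f σ) →
    entropy μ f ≤ C₁ * ∑ v : V, avgEnt μ {v} f

/-- `μ` satisfies `ℓ`-uniform block factorization of entropy with constant `C`. -/
def UniformBlockFactorization (μ : (V → Fin q) → ℝ) (ℓ : ℕ) (C : ℝ) : Prop :=
  ∀ f : (V → Fin q) → ℝ, (∀ σ, 0 ≤ f σ) →
    ((ℓ : ℝ) / (Fintype.card V : ℝ)) * entropy μ f ≤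
      C * ((Fintype.card V).choose ℓ : ℝ)⁻¹ *
        ∑ S ∈ Finset.powersetCard ℓ (Finset.univ : Finset V), avgEnt μ S f

/-- `μ` is a probability distribution. -/
def IsProbDist (μ : (V → Fin q) → ℝ) : Prop := (∀ σ, 0 ≤ μ σ) ∧ ∑ σ, μ σ = 1

/-- Unnormalized Gibbs weight of a `q`-spin system with symmetric interaction matrix `A`
and external field `h`. -/
def gibbsWeight (G : SimpleGraph V) [DecidableRel G.Adj]
    (A : Fin q → Fin q → ℝ) (hA : ∀ i j, A i j = A j i) (h : Fin q → ℝ)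
    (σ : V → Fin q) : ℝ :=
  (∏ e ∈ G.edgeFinset,
      Sym2.lift ⟨fun u v => A (σ u) (σ v), fun u v => hA (σ u) (σ v)⟩ e) *
    ∏ v : V, h (σ v)

/-- The Glauber dynamics transition matrix for `μ`. -/
def glauberMatrix (μ : (V → Fin q) → ℝ) : Matrix (V → Fin q) (V → Fin q) ℝ :=
  Matrix.of fun σ σ' =>
    (Fintype.card V : ℝ)⁻¹ *
      ∑ v : V, if ∀ u, u ≠ v → σ' u = σ u then
        μ σ' / ∑ j : Fin q, μ (Function.update σ v j) else 0

/-- Dirichlet form of the Glauber dynamics. -/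
def glauberDirichlet (μ : (V → Fin q) → ℝ) (f g : (V → Fin q) → ℝ) : ℝ :=
  (1 / 2) * ∑ σ, ∑ σ', μ σ * glauberMatrix μ σ σ' * (f σ - f σ') * (g σ - g σ')

/-- Kullback–Leibler divergence. -/
def klDiv (ν μ : (V → Fin q) → ℝ) : ℝ := ∑ σ, ν σ * Real.log (ν σ / μ σ)

end

section Helpers

set_option linter.unusedSectionVars false

variable {V : Type} [Fintype V] [DecidableEq V] {q : ℕ}

/-! ### Block averages and averaged entropy -/

lemma agree_prAgree_eq (μ : (V → Fin q) → ℝ) {Λ : Finset V} {σ τ : V → Fin q}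
    (hst : ∀ v ∈ Λ, σ v = τ v) : prAgree μ Λ σ = prAgree μ Λ τ := by
  unfold prAgree
  refine Finset.sum_congr rfl fun ρ _ => ?_
  have : (∀ v ∈ Λ, ρ v = σ v) ↔ (∀ v ∈ Λ, ρ v = τ v) :=
    ⟨fun h v hv => (h v hv).trans (hst v hv), fun h v hv => (h v hv).trans (hst v hv).symm⟩
  by_cases h : ∀ v ∈ Λ, ρ v = σ v
  · rw [if_pos h, if_pos (this.1 h)]
  · rw [if_neg h, if_neg (fun h' => h (this.2 h'))]

lemma le_prAgree {μ : (V → Fin q) → ℝ} (h0 : ∀ σ, 0 ≤ μ σ) (Λ : Finset V) (τ : V → Fin q) :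
    μ τ ≤ prAgree μ Λ τ := by
  unfold prAgree
  calc μ τ = if ∀ v ∈ Λ, τ v = τ v then μ τ else 0 := by rw [if_pos (fun _ _ => rfl)]
    _ ≤ _ := Finset.single_le_sum (f := fun σ => if ∀ v ∈ Λ, σ v = τ v then μ σ else 0)
      (fun σ _ => by split_ifs <;> simp [h0]) (Finset.mem_univ τ)

lemma prAgree_nonneg {μ : (V → Fin q) → ℝ} (h0 : ∀ σ, 0 ≤ μ σ) (Λ : Finset V)
    (τ : V → Fin q) : 0 ≤ prAgree μ Λ τ := (h0 τ).trans (le_prAgree h0 Λ τ)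

lemma condDist_congr (μ : (V → Fin q) → ℝ) {S : Finset V} {σ τ : V → Fin q}
    (hst : ∀ v ∈ Sᶜ, σ v = τ v) : condDist μ S σ = condDist μ S τ := by
  funext ρ
  unfold condDist
  rw [agree_prAgree_eq μ hst]
  have : (∀ v ∈ Sᶜ, ρ v = σ v) ↔ (∀ v ∈ Sᶜ, ρ v = τ v) :=
    ⟨fun h v hv => (h v hv).trans (hst v hv), fun h v hv => (h v hv).trans (hst v hv).symm⟩
  by_cases h : ∀ v ∈ Sᶜ, ρ v = σ v
  · rw [if_pos h, if_pos (this.1 h)]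
  · rw [if_neg h, if_neg (fun h' => h (this.2 h'))]

lemma condDist_nonneg {μ : (V → Fin q) → ℝ} (h0 : ∀ σ, 0 ≤ μ σ) (S : Finset V)
    (τ σ : V → Fin q) : 0 ≤ condDist μ S τ σ := by
  unfold condDist
  refine div_nonneg ?_ (prAgree_nonneg h0 _ _)
  split_ifs <;> simp [h0]

lemma condDist_of_agree (μ : (V → Fin q) → ℝ) {S : Finset V} {σ τ : V → Fin q}
    (hst : ∀ v ∈ Sᶜ, σ v = τ v) : condDist μ S τ σ = μ σ / prAgree μ Sᶜ τ := by
  unfold condDist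
  rw [if_pos hst]

lemma agree_of_condDist_ne {μ : (V → Fin q) → ℝ} {S : Finset V} {σ τ : V → Fin q}
    (h : condDist μ S τ σ ≠ 0) : ∀ v ∈ Sᶜ, σ v = τ v := by
  by_contra h'
  exact h (by unfold condDist; rw [if_neg h', zero_div])

lemma pos_of_condDist_ne {μ : (V → Fin q) → ℝ} (h0 : ∀ σ, 0 ≤ μ σ) {S : Finset V}
    {σ τ : V → Fin q} (h : condDist μ S τ σ ≠ 0) : 0 < μ σ := by
  refine lt_of_le_of_ne (h0 σ) fun h' => h ?_
  rw [condDist_of_agree μ (agree_of_condDist_ne h), ← h', zero_div]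

lemma sum_condDist {μ : (V → Fin q) → ℝ} (h0 : ∀ σ, 0 ≤ μ σ) (S : Finset V)
    {τ : V → Fin q} (hτ : 0 < μ τ) : ∑ σ, condDist μ S τ σ = 1 := by
  unfold condDist
  rw [← Finset.sum_div]
  exact div_self (hτ.trans_le (le_prAgree h0 _ τ)).ne'

lemma condDist_self_pos {μ : (V → Fin q) → ℝ} (h0 : ∀ σ, 0 ≤ μ σ) (S : Finset V)
    {τ : V → Fin q} (hτ : 0 < μ τ) : 0 < condDist μ S τ τ := by
  rw [condDist_of_agree μ (fun _ _ => rfl)]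
  exact div_pos hτ (hτ.trans_le (le_prAgree h0 _ τ))

/-- Detailed balance for the heat-bath update of the block `S`. -/
lemma condDist_reversible (μ : (V → Fin q) → ℝ) (S : Finset V) (σ τ : V → Fin q) :
    μ τ * condDist μ S τ σ = μ σ * condDist μ S σ τ := by
  by_cases h : ∀ v ∈ Sᶜ, σ v = τ v
  · rw [condDist_of_agree μ h, condDist_of_agree μ (fun v hv => (h v hv).symm),
      agree_prAgree_eq μ h]
    ring
  · have h1 : condDist μ S τ σ = 0 := by
      by_contra h'; exact h (agree_of_condDist_ne h')
    have h2 : condDist μ S σ τ = 0 := by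
      by_contra h'; exact h (fun v hv => (agree_of_condDist_ne h' v hv).symm)
    rw [h1, h2]; ring

/-- Conditional expectation on the block `S` integrates correctly against functions of the
configuration outside `S`. -/
lemma sum_mul_expec_condDist {μ : (V → Fin q) → ℝ} (h0 : ∀ σ, 0 ≤ μ σ) (S : Finset V)
    (f k : (V → Fin q) → ℝ) (hk : ∀ σ τ, (∀ v ∈ Sᶜ, σ v = τ v) → k σ = k τ) :
    ∑ τ, μ τ * (k τ * expec (condDist μ S τ) f) = ∑ σ, μ σ * (k σ * f σ) := by
  unfold expec
  have h1 : ∀ τ, μ τ * (k τ * ∑ σ, condDist μ S τ σ * f σ) =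
      ∑ σ, μ σ * (k σ * f σ) * condDist μ S σ τ := by
    intro τ
    rw [Finset.mul_sum, Finset.mul_sum]
    refine Finset.sum_congr rfl fun σ _ => ?_
    by_cases h : condDist μ S σ τ = 0
    · have := condDist_reversible μ S σ τ
      rw [h] at this ⊢
      linear_combination (k τ * f σ) * this
    · rw [hk σ τ fun v hv => (agree_of_condDist_ne h v hv).symm]
      linear_combination (k τ * f σ) * condDist_reversible μ S σ τ
  rw [Finset.sum_congr rfl fun τ _ => h1 τ, Finset.sum_comm]
  refine Finset.sum_congr rfl fun σ _ => ?_
  rw [← Finset.mul_sum]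
  rcases (h0 σ).eq_or_lt with h | h
  · rw [← h]; ring
  · rw [sum_condDist h0 S h, mul_one]

lemma sum_expec_condDist {μ : (V → Fin q) → ℝ} (h0 : ∀ σ, 0 ≤ μ σ) (S : Finset V)
    (f : (V → Fin q) → ℝ) :
    ∑ τ, μ τ * expec (condDist μ S τ) f = ∑ σ, μ σ * f σ := by
  simpa using sum_mul_expec_condDist h0 S f (fun _ => 1) (fun _ _ _ => rfl)

lemma expec_nonneg {π f : (V → Fin q) → ℝ} (hπ : ∀ σ, 0 ≤ π σ) (hf : ∀ σ, 0 ≤ f σ) :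
    0 ≤ expec π f := Finset.sum_nonneg fun σ _ => mul_nonneg (hπ σ) (hf σ)

lemma expec_condDist_pos {μ : (V → Fin q) → ℝ} (h0 : ∀ σ, 0 ≤ μ σ) (S : Finset V)
    {τ : V → Fin q} (hτ : 0 < μ τ) {f : (V → Fin q) → ℝ} (hf : ∀ σ, 0 ≤ f σ)
    (hfτ : 0 < f τ) : 0 < expec (condDist μ S τ) f :=
  (mul_pos (condDist_self_pos h0 S hτ) hfτ).trans_le
    (Finset.single_le_sum (f := fun σ => condDist μ S τ σ * f σ)
      (fun σ _ => mul_nonneg (condDist_nonneg h0 S τ σ) (hf σ)) (Finset.mem_univ τ))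

/-- The averaged block entropy as a single sum: the boundary condition can be taken to be the
sampled configuration itself. -/
lemma avgEnt_eq {μ : (V → Fin q) → ℝ} (h0 : ∀ σ, 0 ≤ μ σ) (S : Finset V)
    (f : (V → Fin q) → ℝ) :
    avgEnt μ S f = ∑ σ, μ σ * (f σ * Real.log (f σ / expec (condDist μ S σ) f)) := by
  rw [← sum_expec_condDist h0 S]
  unfold avgEnt
  refine Finset.sum_congr rfl fun τ _ => ?_
  congr 1
  rw [entropy, expec]
  refine Finset.sum_congr rfl fun σ _ => ?_
  by_cases h : condDist μ S τ σ = 0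
  · rw [h]; ring
  · simp only [condDist_congr μ (agree_of_condDist_ne h)]
    rw [← expec]
    ring

/-- If block averages over `A` and `B` compose to the block average over `S`, then the averaged
entropy is subadditive. This is the data-processing inequality, proved through
`log x ≤ x - 1`. -/
lemma avgEnt_le_add_of_comp {μ : (V → Fin q) → ℝ} (h0 : ∀ σ, 0 ≤ μ σ) {S A B : Finset V}
    (hAS : A ⊆ S) {f : (V → Fin q) → ℝ} (hf : ∀ σ, 0 ≤ f σ)
    (hcomp : ∀ τ, 0 < μ τ → expec (condDist μ A τ) (fun ρ => expec (condDist μ B ρ) f)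
      = expec (condDist μ S τ) f) :
    avgEnt μ S f ≤ avgEnt μ A f + avgEnt μ B f := by
  rw [avgEnt_eq h0, avgEnt_eq h0, avgEnt_eq h0]
  set a := fun σ => expec (condDist μ A σ) f with ha
  set c := fun σ => expec (condDist μ S σ) f with hc
  set g := fun σ => expec (condDist μ B σ) f with hg
  have ha0 : ∀ σ, 0 ≤ a σ := fun σ => expec_nonneg (condDist_nonneg h0 A σ) hf
  have hc0 : ∀ σ, 0 ≤ c σ := fun σ => expec_nonneg (condDist_nonneg h0 S σ) hf
  have hg0 : ∀ σ, 0 ≤ g σ := fun σ => expec_nonneg (condDist_nonneg h0 B σ) hf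
  have hpt : ∀ σ, μ σ * (f σ * Real.log (f σ / c σ)) ≤
      μ σ * (f σ * Real.log (f σ / a σ)) + μ σ * (f σ * Real.log (f σ / g σ)) +
      (μ σ * (a σ / c σ * g σ) - μ σ * f σ) := by
    intro σ
    rcases (h0 σ).eq_or_lt with h | h
    · rw [← h]; simp
    rcases (hf σ).eq_or_lt with h' | h'
    · rw [← h']
      have : 0 ≤ μ σ * (a σ / c σ * g σ) :=
        mul_nonneg (h0 σ) (mul_nonneg (div_nonneg (ha0 σ) (hc0 σ)) (hg0 σ))
      simpa using this
    have pa : 0 < a σ := expec_condDist_pos h0 A h hf h'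
    have pc : 0 < c σ := expec_condDist_pos h0 S h hf h'
    have pg : 0 < g σ := expec_condDist_pos h0 B h hf h'
    have hlog : Real.log (f σ / c σ) ≤ Real.log (f σ / a σ) + Real.log (f σ / g σ) +
        (a σ / c σ * g σ / f σ - 1) := by
      have h1 := Real.log_le_sub_one_of_pos (x := a σ / c σ * g σ / f σ) (by positivity)
      rw [Real.log_div (by positivity) h'.ne', Real.log_mul (by positivity) pg.ne',
        Real.log_div pa.ne' pc.ne'] at h1
      rw [Real.log_div h'.ne' pc.ne', Real.log_div h'.ne' pa.ne', Real.log_div h'.ne' pg.ne']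
      linarith
    have h2 := mul_le_mul_of_nonneg_left hlog (mul_pos h h').le
    have h4 : μ σ * f σ * (a σ / c σ * g σ / f σ) = μ σ * (a σ / c σ * g σ) := by
      field_simp
    nlinarith
  have hsum : ∑ σ, μ σ * (a σ / c σ * g σ) ≤ ∑ σ, μ σ * f σ := by
    have hinv : ∀ σ τ : V → Fin q, (∀ v ∈ Aᶜ, σ v = τ v) → a σ / c σ = a τ / c τ := by
      intro σ τ h
      have hS : ∀ v ∈ Sᶜ, σ v = τ v := fun v hv => h v (by
        simp only [Finset.mem_compl] at hv ⊢; exact fun h' => hv (hAS h'))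
      simp only [ha, hc, condDist_congr μ h, condDist_congr μ hS]
    rw [← sum_mul_expec_condDist h0 A g (fun σ => a σ / c σ) hinv, ← sum_expec_condDist h0 A f]
    refine Finset.sum_le_sum fun σ _ => ?_
    rcases (h0 σ).eq_or_lt with h | h
    · rw [← h]; simp
    refine mul_le_mul_of_nonneg_left ?_ h.le
    rw [hcomp σ h]
    change a σ / c σ * c σ ≤ a σ
    rcases (hc0 σ).eq_or_lt with h' | h'
    · rw [← h']; simpa using ha0 σ
    · rw [div_mul_cancel₀ _ h'.ne']
  have := Finset.sum_le_sum fun σ (_ : σ ∈ Finset.univ) => hpt σ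
  simp only [Finset.sum_add_distrib, Finset.sum_sub_distrib] at this
  linarith

/-! ### The Markov property -/

/-- The four-point identity for a block `A ∪ B` forces the block average over `A ∪ B` to be the
composition of the block averages over `A` and `B`. -/
lemma expec_condDist_comp {μ : (V → Fin q) → ℝ} (h0 : ∀ σ, 0 ≤ μ σ) {A B : Finset V}
    (hAB : Disjoint A B)
    (h4 : ∀ σ τ : V → Fin q, (∀ v ∈ (A ∪ B)ᶜ, σ v = τ v) →
      μ σ * μ τ = μ (A.piecewise σ τ) * μ (A.piecewise τ σ))
    (f : (V → Fin q) → ℝ) {τ : V → Fin q} (hτ : 0 < μ τ) :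
    expec (condDist μ A τ) (fun ρ => expec (condDist μ B ρ) f)
      = expec (condDist μ (A ∪ B) τ) f := by
  have key : ∀ σ, ∑ ρ, condDist μ A τ ρ * condDist μ B ρ σ = condDist μ (A ∪ B) τ σ := by
    intro σ
    by_cases hσ : ∀ v ∈ (A ∪ B)ᶜ, σ v = τ v
    · set ρ₀ : V → Fin q := A.piecewise σ τ with hρ₀
      have hρτ : ∀ v ∈ Aᶜ, ρ₀ v = τ v := by
        intro v hv
        rw [hρ₀, Finset.piecewise_eq_of_notMem _ _ _ (Finset.mem_compl.1 hv)]
      have hσρ : ∀ v ∈ Bᶜ, σ v = ρ₀ v := by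
        intro v hv
        by_cases hA : v ∈ A
        · rw [hρ₀, Finset.piecewise_eq_of_mem _ _ _ hA]
        · rw [hρτ v (Finset.mem_compl.2 hA)]
          exact hσ v (by simp only [Finset.mem_compl, Finset.mem_union] at hv ⊢; tauto)
      rw [Finset.sum_eq_single ρ₀]
      · rw [condDist_of_agree μ hρτ, condDist_of_agree μ hσρ, condDist_of_agree μ hσ]
        rcases (h0 σ).eq_or_lt with hμσ | hμσ
        · rw [← hμσ]; simp
        have hμρ : 0 < μ ρ₀ := by
          have := h4 σ τ hσ
          refine lt_of_le_of_ne (h0 _) fun h' => ?_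
          rw [← hρ₀, ← h', zero_mul] at this
          exact (mul_pos hμσ hτ).ne' this
        have hw : prAgree μ Aᶜ τ * prAgree μ Bᶜ ρ₀ = μ ρ₀ * prAgree μ (A ∪ B)ᶜ τ := by
          unfold prAgree
          rw [← Finset.sum_filter, ← Finset.sum_filter, ← Finset.sum_filter,
            Finset.sum_mul_sum, Finset.mul_sum, ← Finset.sum_product']
          have hdis : ∀ v, v ∈ A → v ∉ B := fun v hv hv' =>
            Finset.disjoint_left.1 hAB hv hv'
          have e1 : ∀ α β : V → Fin q, (∀ v ∈ Aᶜ, α v = τ v) →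
              A.piecewise (A.piecewise α β) ρ₀ = α := by
            intro α β hα
            funext v
            by_cases hv : v ∈ A
            · simp [hv]
            · simp [hv, hρ₀, hα v (Finset.mem_compl.2 hv)]
          have e2 : ∀ α β : V → Fin q, (∀ v ∈ Bᶜ, β v = ρ₀ v) →
              A.piecewise ρ₀ (A.piecewise α β) = β := by
            intro α β hβ
            funext v
            by_cases hv : v ∈ A
            · simp only [hv, Finset.piecewise_eq_of_mem]
              exact (hβ v (Finset.mem_compl.2 (hdis v hv))).symm
            · simp [hv]
          have e3 : ∀ α β : V → Fin q, (∀ v ∈ Bᶜ, β v = ρ₀ v) →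
              ∀ v ∈ (A ∪ B)ᶜ, (A.piecewise α β) v = τ v := by
            intro α β hβ v hv
            simp only [Finset.mem_compl, Finset.mem_union, not_or] at hv
            rw [Finset.piecewise_eq_of_notMem _ _ _ hv.1, hβ v (Finset.mem_compl.2 hv.2),
              hρτ v (Finset.mem_compl.2 hv.1)]
          refine Finset.sum_nbij' (fun p => A.piecewise p.1 p.2)
            (fun η => (A.piecewise η ρ₀, A.piecewise ρ₀ η)) ?_ ?_ ?_ ?_ ?_
          · rintro ⟨α, β⟩ hp
            simp only [Finset.mem_product, Finset.mem_filter, Finset.mem_univ, true_and] at hp ⊢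
            exact e3 α β hp.2
          · intro η hη
            simp only [Finset.mem_product, Finset.mem_filter, Finset.mem_univ, true_and] at hη ⊢
            refine ⟨fun v hv => ?_, fun v hv => ?_⟩
            · rw [Finset.piecewise_eq_of_notMem _ _ _ (Finset.mem_compl.1 hv)]
              exact hρτ v hv
            · by_cases hA : v ∈ A
              · rw [Finset.piecewise_eq_of_mem _ _ _ hA]
              · rw [Finset.piecewise_eq_of_notMem _ _ _ hA, hρτ v (Finset.mem_compl.2 hA)]
                exact hη v (by simp only [Finset.mem_compl, Finset.mem_union] at hv ⊢; tauto)
          · rintro ⟨α, β⟩ hp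
            simp only [Finset.mem_product, Finset.mem_filter, Finset.mem_univ, true_and] at hp
            simp only [e1 α β hp.1, e2 α β hp.2]
          · intro η _
            funext v
            by_cases hv : v ∈ A <;> simp [hv]
          · rintro ⟨α, β⟩ hp
            simp only [Finset.mem_product, Finset.mem_filter, Finset.mem_univ, true_and] at hp
            have := h4 (A.piecewise α β) ρ₀ (fun v hv => by
              rw [e3 α β hp.2 v hv]
              exact (hρτ v (by
                simp only [Finset.mem_compl, Finset.mem_union] at hv ⊢; tauto)).symm)
            rw [e1 α β hp.1, e2 α β hp.2] at this
            simp only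
            linarith
        have p1 := hτ.trans_le (le_prAgree h0 Aᶜ τ)
        have p2 := hμρ.trans_le (le_prAgree h0 Bᶜ ρ₀)
        have p3 := hτ.trans_le (le_prAgree h0 (A ∪ B)ᶜ τ)
        rw [div_mul_div_comm, hw]
        field_simp
      · intro ρ _ hne
        by_contra hcon
        rcases mul_ne_zero_iff.1 hcon with ⟨hc1, hc2⟩
        refine hne (funext fun v => ?_)
        by_cases hv : v ∈ A
        · rw [hρ₀, Finset.piecewise_eq_of_mem _ _ _ hv]
          exact (agree_of_condDist_ne hc2 v
            (Finset.mem_compl.2 (Finset.disjoint_left.1 hAB hv))).symm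
        · rw [hρτ v (Finset.mem_compl.2 hv)]
          exact agree_of_condDist_ne hc1 v (Finset.mem_compl.2 hv)
      · exact fun h => absurd (Finset.mem_univ _) h
    · have h2 : condDist μ (A ∪ B) τ σ = 0 := by
        by_contra h'; exact hσ (agree_of_condDist_ne h')
      rw [h2]
      refine Finset.sum_eq_zero fun ρ _ => ?_
      by_contra hcon
      rcases mul_ne_zero_iff.1 hcon with ⟨hc1, hc2⟩
      refine hσ fun v hv => ?_
      simp only [Finset.mem_compl, Finset.mem_union, not_or] at hv
      rw [agree_of_condDist_ne hc2 v (Finset.mem_compl.2 hv.2),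
        agree_of_condDist_ne hc1 v (Finset.mem_compl.2 hv.1)]
  unfold expec
  simp_rw [Finset.mul_sum]
  rw [Finset.sum_comm]
  refine Finset.sum_congr rfl fun σ _ => ?_
  rw [← key σ, Finset.sum_mul]
  exact Finset.sum_congr rfl fun ρ _ => by ring

/-- Spatial Markov property of Gibbs weights, in four-point form: swapping the configurations on
`A` between two configurations that agree outside `A ∪ B` preserves the product of weights,
because no edge joins `A` to `B`. -/
lemma gibbsWeight_four_point (G : SimpleGraph V) [DecidableRel G.Adj]
    (J : Fin q → Fin q → ℝ) (hJ : ∀ i j, J i j = J j i) (h : Fin q → ℝ) {A B : Finset V}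
    (hno : ∀ a ∈ A, ∀ c ∈ B, ¬ G.Adj a c) (σ τ : V → Fin q)
    (hst : ∀ v ∈ (A ∪ B)ᶜ, σ v = τ v) :
    gibbsWeight G J hJ h σ * gibbsWeight G J hJ h τ =
      gibbsWeight G J hJ h (A.piecewise σ τ) * gibbsWeight G J hJ h (A.piecewise τ σ) := by
  unfold gibbsWeight
  refine (mul_mul_mul_comm _ _ _ _).trans (Eq.trans ?_ (mul_mul_mul_comm _ _ _ _))
  rw [← Finset.prod_mul_distrib, ← Finset.prod_mul_distrib,
    ← Finset.prod_mul_distrib, ← Finset.prod_mul_distrib]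
  congr 1
  · refine Finset.prod_congr rfl fun e he => ?_
    induction e using Sym2.ind with
    | _ u v =>
      rw [SimpleGraph.mem_edgeFinset, SimpleGraph.mem_edgeSet] at he
      simp only [Sym2.lift_mk]
      have hag : ∀ w, w ∉ A → w ∉ B → σ w = τ w := fun w h1 h2 => hst w (by
        simp only [Finset.mem_compl, Finset.mem_union, not_or]; exact ⟨h1, h2⟩)
      by_cases hu : u ∈ A <;> by_cases hv : v ∈ A
      · simp [hu, hv]
      · have := hag v hv (fun h' => hno u hu v h' he)
        simp [hu, hv, this]
      · have := hag u hu (fun h' => hno v hv u h' he.symm)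
        simp [hu, hv, this]
      · simp only [hu, hv, not_false_eq_true, Finset.piecewise_eq_of_notMem]
        ring
  · refine Finset.prod_congr rfl fun v _ => ?_
    by_cases hv : v ∈ A
    · simp [hv]
    · simp [hv, mul_comm]

/-! ### Connected components inside a block -/

/-- `RootedReach G U a u`: there is a path from `a` to `u` all of whose vertices after the first
lie in `U`. -/
def RootedReach (G : SimpleGraph V) (U : Finset V) (a u : V) : Prop :=
  Relation.ReflTransGen (fun x y => G.Adj x y ∧ y ∈ U) a u

/-- The connected component of `v` in the subgraph induced on `S` (meaningful for `v ∈ S`). -/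
noncomputable def compIn (G : SimpleGraph V) (S : Finset V) (v : V) : Finset V :=
  Finset.univ.filter fun u => RootedReach G S v u

lemma mem_compIn {G : SimpleGraph V} {S : Finset V} {u v : V} :
    u ∈ compIn G S v ↔ RootedReach G S v u := by
  simp [compIn]

lemma self_mem_compIn (G : SimpleGraph V) (S : Finset V) (v : V) : v ∈ compIn G S v :=
  mem_compIn.2 Relation.ReflTransGen.refl

lemma compIn_subset {G : SimpleGraph V} {S : Finset V} {v : V} (hv : v ∈ S) :
    compIn G S v ⊆ S := by
  intro u hu
  rcases Relation.ReflTransGen.cases_tail (mem_compIn.1 hu) with h | ⟨_, _, h⟩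
  · exact h ▸ hv
  · exact h.2

lemma RootedReach.symm {G : SimpleGraph V} {S : Finset V} {u v : V} (hv : v ∈ S)
    (h : RootedReach G S v u) : RootedReach G S u v := by
  have hu : ∀ {x}, RootedReach G S v x → x ∈ S := fun hx => compIn_subset hv (mem_compIn.2 hx)
  induction h with
  | refl => exact Relation.ReflTransGen.refl
  | tail h1 h2 ih => exact Relation.ReflTransGen.head ⟨h2.1.symm, hu h1⟩ ih

lemma compIn_eq_of_mem {G : SimpleGraph V} {S : Finset V} {v w : V} (hv : v ∈ S)
    (hw : w ∈ compIn G S v) : compIn G S w = compIn G S v := by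
  ext u
  rw [mem_compIn] at *
  rw [mem_compIn]
  exact ⟨fun h => Relation.ReflTransGen.trans hw h,
    fun h => Relation.ReflTransGen.trans (RootedReach.symm hv hw) h⟩

lemma mem_compIn_of_adj {G : SimpleGraph V} {S : Finset V} {v x y : V}
    (hx : x ∈ compIn G S v) (hxy : G.Adj x y) (hy : y ∈ S) : y ∈ compIn G S v :=
  mem_compIn.2 (Relation.ReflTransGen.tail (mem_compIn.1 hx) ⟨hxy, hy⟩)

lemma compIn_sdiff {G : SimpleGraph V} {S : Finset V} {v w : V} (hw : w ∈ S \ compIn G S v) :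
    compIn G (S \ compIn G S v) w = compIn G S w := by
  have hwS := (Finset.mem_sdiff.1 hw).1
  ext u
  rw [mem_compIn, mem_compIn]
  constructor
  · exact fun h => Relation.ReflTransGen.mono
      (fun x y (hxy : G.Adj x y ∧ y ∈ S \ compIn G S v) =>
        (⟨hxy.1, (Finset.mem_sdiff.1 hxy.2).1⟩ : G.Adj x y ∧ y ∈ S)) w u h
  · intro h
    have : RootedReach G (S \ compIn G S v) w u ∧ u ∈ S \ compIn G S v := by
      induction h with
      | refl => exact ⟨Relation.ReflTransGen.refl, hw⟩
      | @tail x y h1 h2 ih =>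
        have hy : y ∈ S \ compIn G S v := by
          refine Finset.mem_sdiff.2 ⟨h2.2, fun hy => (Finset.mem_sdiff.1 ih.2).2 ?_⟩
          exact mem_compIn_of_adj hy h2.1.symm (Finset.mem_sdiff.1 ih.2).1
        exact ⟨Relation.ReflTransGen.tail ih.1 ⟨h2.1, hy⟩, hy⟩
    exact this.1

/-- A set function that is subadditive over non-adjacent blocks and locally controlled by `M` is
controlled by its values on connected components. -/
lemma le_sum_compIn (G : SimpleGraph V) (F : Finset V → ℝ) (M : ℕ → ℝ) (a : V → ℝ)
    (hF0 : F ∅ = 0)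
    (hsub : ∀ A B : Finset V, Disjoint A B → (∀ x ∈ A, ∀ y ∈ B, ¬ G.Adj x y) →
      F (A ∪ B) ≤ F A + F B)
    (hloc : ∀ U : Finset V, U.Nonempty → F U ≤ M U.card * ∑ v ∈ U, a v) (S : Finset V) :
    F S ≤ ∑ v ∈ S, M (compIn G S v).card * a v := by
  induction S using Finset.strongInduction with
  | H S ih =>
    rcases S.eq_empty_or_nonempty with rfl | ⟨v, hv⟩
    · simp [hF0]
    have hUS : compIn G S v ⊆ S := compIn_subset hv
    have h1 := hsub (compIn G S v) (S \ compIn G S v) Finset.disjoint_sdiff (by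
      intro x hx y hy hxy
      rw [Finset.mem_sdiff] at hy
      exact hy.2 (mem_compIn_of_adj hx hxy hy.1))
    rw [Finset.union_sdiff_of_subset hUS] at h1
    have h2 := hloc (compIn G S v) ⟨v, self_mem_compIn G S v⟩
    have h3 := ih (S \ compIn G S v) (Finset.sdiff_ssubset hUS ⟨v, self_mem_compIn G S v⟩)
    rw [← Finset.sum_sdiff hUS]
    have h4 : ∑ x ∈ compIn G S v, M (compIn G S x).card * a x =
        M (compIn G S v).card * ∑ x ∈ compIn G S v, a x := by
      rw [Finset.mul_sum]
      exact Finset.sum_congr rfl fun x hx => by rw [compIn_eq_of_mem hv hx]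
    have h5 : ∑ x ∈ S \ compIn G S v, M (compIn G (S \ compIn G S v) x).card * a x =
        ∑ x ∈ S \ compIn G S v, M (compIn G S x).card * a x :=
      Finset.sum_congr rfl fun x hx => by rw [compIn_sdiff hx]
    linarith

/-! ### Counting connected sets -/

/-- Every vertex of `U` is reached from the root set `A` through `U`. -/
def Rooted (G : SimpleGraph V) (A U : Finset V) : Prop :=
  ∀ u ∈ U, ∃ a ∈ A, RootedReach G U a u

lemma RootedReach.erase {G : SimpleGraph V} {U : Finset V} {a x : V} (u : V)
    (h : RootedReach G U a x) :
    RootedReach G (U.erase u) a x ∨ RootedReach G (U.erase u) u x := by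
  induction h with
  | refl => exact Or.inl Relation.ReflTransGen.refl
  | @tail x y h1 h2 ih =>
    by_cases hy : y = u
    · subst hy; exact Or.inr Relation.ReflTransGen.refl
    · have h3 : G.Adj x y ∧ y ∈ U.erase u := ⟨h2.1, Finset.mem_erase.2 ⟨hy, h2.2⟩⟩
      exact ih.imp (fun h => Relation.ReflTransGen.tail h h3)
        (fun h => Relation.ReflTransGen.tail h h3)

/-- Number of edges between the explored set `A` and the unexplored set `W`. -/
def crossEdges (G : SimpleGraph V) [DecidableRel G.Adj] (A W : Finset V) : ℕ :=
  ∑ w ∈ W, (A.filter fun a => G.Adj w a).card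

/-- Exploration bound for rooted vertex sets: revealing a boundary vertex `u` of the explored set
either deletes it, which removes a crossing edge, or absorbs it, which costs a factor `y` and
creates at most `Δ - 1` new crossing edges while removing at least one. -/
lemma sum_rooted_le (G : SimpleGraph V) [DecidableRel G.Adj] {Δ : ℕ} (hΔ : 1 ≤ Δ)
    (hdeg : ∀ v, G.degree v ≤ Δ) {c y : ℝ} (hc : 1 ≤ c) (hy : 0 ≤ y)
    (hcy : 1 + y * c ^ (Δ - 1) ≤ c) (W : Finset V) : ∀ A : Finset V, Disjoint A W →
    ∑ U ∈ W.powerset, (if Rooted G A U then y ^ U.card else 0) ≤ c ^ crossEdges G A W := by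
  induction W using Finset.strongInduction with
  | H W ih =>
    intro A hAW
    by_cases hex : ∃ u ∈ W, ∃ a ∈ A, G.Adj u a
    · obtain ⟨u, hu, a, ha, hua⟩ := hex
      have huW : u ∉ W.erase u := Finset.notMem_erase u W
      have huA : u ∉ A := fun h' => Finset.disjoint_left.1 hAW h' hu
      have hdis : Disjoint A (W.erase u) :=
        Finset.disjoint_of_subset_right (Finset.erase_subset u W) hAW
      have hdis' : Disjoint (insert u A) (W.erase u) :=
        Finset.disjoint_insert_left.2 ⟨huW, hdis⟩
      have i1 := ih (W.erase u) (Finset.erase_ssubset hu) A hdis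
      have i2 := ih (W.erase u) (Finset.erase_ssubset hu) (insert u A) hdis'
      set t := (A.filter fun a => G.Adj u a).card with ht
      have ht1 : 1 ≤ t := Finset.card_pos.2 ⟨a, Finset.mem_filter.2 ⟨ha, hua⟩⟩
      have e1 : crossEdges G A W = crossEdges G A (W.erase u) + t := by
        unfold crossEdges
        rw [Finset.sum_erase_add _ _ hu]
      have e2 : crossEdges G (insert u A) (W.erase u) =
          crossEdges G A (W.erase u) + ((W.erase u).filter fun w => G.Adj u w).card := by
        unfold crossEdges
        rw [Finset.card_filter, ← Finset.sum_add_distrib]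
        refine Finset.sum_congr rfl fun w _ => ?_
        rw [Finset.filter_insert]
        by_cases hwu : G.Adj w u
        · rw [if_pos hwu, if_pos hwu.symm, Finset.card_insert_of_notMem]
          exact fun h' => huA (Finset.mem_filter.1 h').1
        · rw [if_neg hwu, if_neg (fun h' => hwu h'.symm), add_zero]
      have e3 : ((W.erase u).filter fun w => G.Adj u w).card + t ≤ Δ := by
        rw [ht, ← Finset.card_union_of_disjoint]
        · refine (Finset.card_le_card ?_).trans (hdeg u)
          intro w hw
          rw [SimpleGraph.mem_neighborFinset]
          rcases Finset.mem_union.1 hw with h' | h' <;> exact (Finset.mem_filter.1 h').2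
        · exact Finset.disjoint_filter_filter hdis.symm
      have hstep : ∑ U ∈ (W.erase u).powerset,
          (if Rooted G A (insert u U) then y ^ (insert u U).card else 0) ≤
          y * ∑ U ∈ (W.erase u).powerset, (if Rooted G (insert u A) U then y ^ U.card else 0) := by
        rw [Finset.mul_sum]
        refine Finset.sum_le_sum fun U hU => ?_
        have huU : u ∉ U := fun h' => huW (Finset.mem_powerset.1 hU h')
        by_cases hr : Rooted G A (insert u U)
        · have hr' : Rooted G (insert u A) U := by
            intro x hx
            obtain ⟨a', ha', hp⟩ := hr x (Finset.mem_insert_of_mem hx)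
            have := hp.erase u
            rw [Finset.erase_insert huU] at this
            rcases this with h' | h'
            · exact ⟨a', Finset.mem_insert_of_mem ha', h'⟩
            · exact ⟨u, Finset.mem_insert_self u A, h'⟩
          rw [if_pos hr, if_pos hr', Finset.card_insert_of_notMem huU, pow_succ]
          exact le_of_eq (mul_comm _ _)
        · rw [if_neg hr]
          split_ifs <;> positivity
      rw [show W.powerset = (insert u (W.erase u)).powerset by rw [Finset.insert_erase hu],
        Finset.sum_powerset_insert huW]
      have hcp : (0:ℝ) ≤ c := by linarith
      set E := crossEdges G A (W.erase u) with hE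
      calc _ ≤ c ^ E + y * c ^ (E + (Δ - 1)) := by
            refine add_le_add i1 (hstep.trans (mul_le_mul_of_nonneg_left (i2.trans ?_) hy))
            exact pow_le_pow_right₀ hc (by rw [e2]; omega)
        _ = c ^ E * (1 + y * c ^ (Δ - 1)) := by rw [pow_add]; ring
        _ ≤ c ^ E * c := mul_le_mul_of_nonneg_left hcy (by positivity)
        _ = c ^ (E + 1) := by rw [pow_succ]
        _ ≤ _ := pow_le_pow_right₀ hc (by rw [e1]; omega)
    · push Not at hex
      rw [Finset.sum_eq_single ∅]
      · simp only [Finset.card_empty, pow_zero]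
        split_ifs
        · exact one_le_pow₀ hc
        · positivity
      · intro U hU hne
        rw [if_neg]
        intro hr
        obtain ⟨u, hu⟩ := Finset.nonempty_iff_ne_empty.2 hne
        obtain ⟨a, ha, hp⟩ := hr u hu
        rcases Relation.ReflTransGen.cases_head hp with h' | ⟨w, h', -⟩
        · exact Finset.disjoint_left.1 hAW ha (h' ▸ Finset.mem_powerset.1 hU hu)
        · exact hex w (Finset.mem_powerset.1 hU h'.2) a ha h'.1.symm
      · exact fun hne => absurd (Finset.empty_mem_powerset W) hne

/-- Generating-function bound for the connected vertex sets containing a given vertex. -/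
lemma sum_connected_le (G : SimpleGraph V) [DecidableRel G.Adj] {Δ : ℕ} (hΔ : 1 ≤ Δ)
    (hdeg : ∀ v, G.degree v ≤ Δ) {c y : ℝ} (hc : 1 ≤ c) (hy : 0 ≤ y)
    (hcy : 1 + y * c ^ (Δ - 1) ≤ c) (v : V) :
    ∑ U : Finset V, (if v ∈ U ∧ compIn G U v = U then y ^ (U.card - 1) else 0) ≤ c ^ Δ := by
  have hv : v ∉ (Finset.univ : Finset V).erase v := Finset.notMem_erase v _
  rw [← Finset.powerset_univ, ← Finset.insert_erase (Finset.mem_univ v),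
    Finset.sum_powerset_insert hv]
  have h1 : ∑ U ∈ ((Finset.univ : Finset V).erase v).powerset,
      (if v ∈ U ∧ compIn G U v = U then y ^ (U.card - 1) else 0) = 0 :=
    Finset.sum_eq_zero fun U hU => if_neg fun h' => hv (Finset.mem_powerset.1 hU h'.1)
  rw [h1, zero_add]
  have h2 := sum_rooted_le G hΔ hdeg hc hy hcy (Finset.univ.erase v) {v}
    (Finset.disjoint_singleton_left.2 hv)
  have h3 : crossEdges G {v} (Finset.univ.erase v) ≤ Δ := by
    refine le_trans ?_ (hdeg v)
    unfold crossEdges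
    rw [← SimpleGraph.card_neighborFinset_eq_degree, Finset.card_eq_sum_ones,
      ← Finset.sum_filter_add_sum_filter_not (Finset.univ.erase v) (fun w => G.Adj w v)]
    have h4 : ∑ w ∈ (Finset.univ.erase v).filter (fun w => ¬ G.Adj w v),
        (({v} : Finset V).filter fun a => G.Adj w a).card = 0 :=
      Finset.sum_eq_zero fun w hw => by
        rw [Finset.card_eq_zero, Finset.filter_singleton, if_neg (Finset.mem_filter.1 hw).2]
    rw [h4, add_zero]
    refine (Finset.sum_le_sum (g := fun _ => 1) fun w _ => ?_).trans
      (Finset.sum_le_sum_of_subset fun w hw => ?_)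
    · exact (Finset.card_filter_le _ _).trans (by simp)
    · rw [SimpleGraph.mem_neighborFinset]
      exact (Finset.mem_filter.1 hw).2.symm
  refine le_trans (le_trans (Finset.sum_le_sum fun U hU => ?_) h2) (pow_le_pow_right₀ hc h3)
  have hvU : v ∉ U := fun h' => hv (Finset.mem_powerset.1 hU h')
  by_cases hr : v ∈ insert v U ∧ compIn G (insert v U) v = insert v U
  · have hr' : Rooted G {v} U := by
      intro x hx
      have hp : x ∈ compIn G (insert v U) v := by
        rw [hr.2]; exact Finset.mem_insert_of_mem hx
      have := (mem_compIn.1 hp).erase v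
      rw [Finset.erase_insert hvU, or_self] at this
      exact ⟨v, Finset.mem_singleton_self v, this⟩
    rw [if_pos hr, if_pos hr', Finset.card_insert_of_notMem hvU, Nat.add_sub_cancel]
  · rw [if_neg hr]
    split_ifs <;> positivity

lemma compIn_idem {G : SimpleGraph V} {S : Finset V} {v : V} :
    compIn G (compIn G S v) v = compIn G S v := by
  refine Finset.Subset.antisymm (compIn_subset (self_mem_compIn G S v)) fun u hu => ?_
  rw [mem_compIn] at hu ⊢
  induction hu with
  | refl => exact Relation.ReflTransGen.refl
  | tail h1 h2 ih =>
    exact Relation.ReflTransGen.tail ih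
      ⟨h2.1, mem_compIn_of_adj (mem_compIn.2 h1) h2.1 h2.2⟩

lemma card_filter_superset_le (U : Finset V) (ℓ : ℕ) :
    ((Finset.powersetCard ℓ (Finset.univ : Finset V)).filter fun S => U ⊆ S).card ≤
      (Fintype.card V - U.card).choose (ℓ - U.card) := by
  rw [← Finset.card_compl, ← Finset.card_powersetCard]
  refine Finset.card_le_card_of_injOn (fun S => S \ U) (fun S hS => ?_) (fun S hS T hT hST => ?_)
  · simp only [Finset.mem_coe, Finset.mem_filter, Finset.mem_powersetCard] at hS ⊢
    refine ⟨fun x hx => Finset.mem_compl.2 (Finset.mem_sdiff.1 hx).2, ?_⟩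
    rw [Finset.card_sdiff_of_subset hS.2, hS.1.2]
  · simp only [Finset.mem_coe, Finset.mem_filter] at hS hT
    rw [← Finset.sdiff_union_of_subset hS.2, ← Finset.sdiff_union_of_subset hT.2]
    exact congrArg (· ∪ U) hST

/-- The probability that a uniform `ℓ`-subset of an `n`-set contains a fixed `(k+1)`-set is at
most `(ℓ/n)(2θ)^k` when `ℓ - 1 ≤ θn`: the factors after the first are `(ℓ-j)/(n-j)` with `j ≥ 1`,
and `ℓ - 1 ≤ θn` makes each of them at most `θn/(n-1) ≤ 2θ`. -/
lemma choose_ratio_le {n ℓ : ℕ} {θ : ℝ} (hθ : 0 ≤ θ) (hθ' : θ ≤ 1 / 4)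
    (hl1 : ((ℓ : ℝ) - 1) ≤ θ * n) (hln : ℓ ≤ n) (k : ℕ) (hk : k + 1 ≤ ℓ) :
    ((n - (k + 1)).choose (ℓ - (k + 1)) : ℝ) ≤
      (n.choose ℓ : ℝ) * ((ℓ : ℝ) / n) * (2 * θ) ^ k := by
  have hn : 0 < n := by omega
  induction k with
  | zero =>
    have h1 := Nat.add_one_mul_choose_eq (n - 1) (ℓ - 1)
    rw [Nat.sub_add_cancel (by omega), Nat.sub_add_cancel (by omega)] at h1
    have h2 : (n : ℝ) * ((n - 1).choose (ℓ - 1) : ℝ) = (n.choose ℓ : ℝ) * ℓ := by exact_mod_cast h1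
    have hn' : (0:ℝ) < n := by exact_mod_cast hn
    rw [pow_zero, mul_one, zero_add, ← mul_div_assoc, le_div_iff₀ hn']
    linarith
  | succ k ih =>
    have ih := ih (by omega)
    obtain ⟨N, hN⟩ : ∃ N, n = N + (k + 2) := ⟨n - (k + 2), by omega⟩
    obtain ⟨L, hL⟩ : ∃ L, ℓ = L + (k + 2) := ⟨ℓ - (k + 2), by omega⟩
    have h1 := Nat.add_one_mul_choose_eq N L
    rw [show n - (k + 1) = N + 1 by omega, show ℓ - (k + 1) = L + 1 by omega] at ih
    rw [show n - (k + 1 + 1) = N by omega, show ℓ - (k + 1 + 1) = L by omega]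
    have h2 : ((N : ℝ) + 1) * (N.choose L : ℝ) = ((N + 1).choose (L + 1) : ℝ) * (L + 1) := by
      exact_mod_cast h1
    have h3 : ((L : ℝ) + 1) ≤ 2 * θ * (N + 1) := by
      rw [hL, hN] at hl1
      push_cast at hl1
      have hk0 : (0:ℝ) ≤ k := k.cast_nonneg
      have hN0 : (0:ℝ) ≤ N := N.cast_nonneg
      have hL0 : (0:ℝ) ≤ L := L.cast_nonneg
      by_cases hNk : (k : ℝ) ≤ N
      · nlinarith
      · nlinarith
    have hN1 : (0:ℝ) < (N : ℝ) + 1 := by positivity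
    have h4 : (N.choose L : ℝ) ≤ ((N + 1).choose (L + 1) : ℝ) * (2 * θ) := by
      have h5 : ((N : ℝ) + 1) * (N.choose L : ℝ) ≤
          ((N : ℝ) + 1) * (((N + 1).choose (L + 1) : ℝ) * (2 * θ)) := by
        rw [h2]
        have := mul_le_mul_of_nonneg_left h3 (Nat.cast_nonneg (α := ℝ) ((N + 1).choose (L + 1)))
        linarith
      exact le_of_mul_le_mul_left h5 hN1
    calc _ ≤ _ := h4
      _ ≤ _ := mul_le_mul_of_nonneg_right ih (by positivity)
      _ = _ := by rw [pow_succ]; ring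

/-! ### Entropy versus variance of the square root -/

/-- Twice the variance of `g` under `p`, as a double sum over pairs. -/
lemma sum_sum_sq_sub {α : Type*} [Fintype α] (p g : α → ℝ) (hp : ∑ x, p x = 1) :
    ∑ x, ∑ y, p x * (p y * (g x - g y) ^ 2) =
      2 * (∑ x, p x * g x ^ 2 - (∑ x, p x * g x) ^ 2) := by
  have h1 : ∀ x, ∑ y, p x * (p y * (g x - g y) ^ 2) =
      p x * g x ^ 2 - 2 * (∑ y, p y * g y) * (p x * g x) + (∑ y, p y * g y ^ 2) * p x := by
    intro x
    calc _ = ∑ y, (p x * g x ^ 2 * p y - 2 * (p x * g x) * (p y * g y) + p x * (p y * g y ^ 2)) :=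
          Finset.sum_congr rfl fun y _ => by ring
      _ = _ := by
          rw [Finset.sum_add_distrib, Finset.sum_sub_distrib, ← Finset.mul_sum, ← Finset.mul_sum,
            ← Finset.mul_sum, hp]
          ring
  rw [Finset.sum_congr rfl fun x _ => h1 x, Finset.sum_add_distrib, Finset.sum_sub_distrib,
    ← Finset.mul_sum, ← Finset.mul_sum, hp]
  ring

/-- Pointwise this is `log x ≤ x - 1` at `x = √(p(f)) / √f`. -/
lemma var_le_entropy {p f : (V → Fin q) → ℝ} (hp : ∀ σ, 0 ≤ p σ) (hf : ∀ σ, 0 ≤ f σ) :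
    ∑ σ, p σ * √(f σ) ^ 2 - (∑ σ, p σ * √(f σ)) ^ 2 ≤ entropy p f := by
  set F := expec p f with hF
  set s := ∑ σ, p σ * √(f σ) with hs
  have hF0 : 0 ≤ F := expec_nonneg hp hf
  have h1 : ∑ σ, p σ * √(f σ) ^ 2 = F := by
    rw [hF]; unfold expec
    exact Finset.sum_congr rfl fun σ _ => by rw [Real.sq_sqrt (hf σ)]
  rw [h1]
  unfold entropy
  rw [← hF]
  rcases hF0.eq_or_lt with h | h
  · rw [← h]
    simp only [div_zero, Real.log_zero, mul_zero, Finset.sum_const_zero]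
    nlinarith [sq_nonneg s]
  · have hpt : ∀ σ, 2 * (p σ * f σ) - 2 * √F * (p σ * √(f σ)) ≤
        p σ * f σ * Real.log (f σ / F) := by
      intro σ
      rcases (hf σ).eq_or_lt with h' | h'
      · rw [← h']; simp
      have hg : 0 < √(f σ) := Real.sqrt_pos.2 h'
      have hG : 0 < √F := Real.sqrt_pos.2 h
      have hl := Real.log_le_sub_one_of_pos (div_pos hG hg)
      rw [Real.log_div hG.ne' hg.ne', Real.log_sqrt hF0, Real.log_sqrt (hf σ)] at hl
      rw [Real.log_div h'.ne' h.ne']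
      have h2 : Real.log (f σ) - Real.log F ≥ 2 - 2 * (√F / √(f σ)) := by linarith
      have h3 := mul_le_mul_of_nonneg_left h2 (mul_nonneg (hp σ) (hf σ))
      have h4 : f σ * (√F / √(f σ)) = √F * √(f σ) := by
        nth_rewrite 1 [← Real.sq_sqrt (hf σ)]
        field_simp
      calc _ = p σ * f σ * (2 - 2 * (√F / √(f σ))) := by linear_combination 2 * p σ * h4
        _ ≤ _ := h3
    have h5 := Finset.sum_le_sum fun σ (_ : σ ∈ Finset.univ) => hpt σ
    rw [Finset.sum_sub_distrib, ← Finset.mul_sum, ← Finset.mul_sum] at h5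
    have h6 : ∑ σ, p σ * f σ = F := rfl
    rw [h6, ← hs] at h5
    nlinarith [sq_nonneg (√F - s), Real.sq_sqrt hF0]

/-- Scalar form of the comparison of entropy with the variance of the square root: `r` plays the
role of `√f` divided by its mean, which is at most `R = 1/m` when all atoms have mass at least
`m`. -/
lemma sq_log_le {r R : ℝ} (hr : 0 ≤ r) (hrR : r ≤ R) (hR : 1 ≤ R) :
    r ^ 2 * Real.log (r ^ 2) - r ^ 2 + 1 ≤ (3 + 2 * Real.log R) * (r - 1) ^ 2 := by
  have hR0 : 0 ≤ Real.log R := Real.log_nonneg hR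
  rcases hr.eq_or_lt with h | h
  · rw [← h]; simp; linarith
  rw [Real.log_pow]
  push_cast
  have h1 := Real.log_le_sub_one_of_pos h
  rcases le_total r 1 with h2 | h2
  · nlinarith [mul_le_mul_of_nonneg_left h1 (sq_nonneg r),
      mul_nonneg (sq_nonneg (r - 1)) (sub_nonneg.2 h2), mul_nonneg hR0 (sq_nonneg (r - 1))]
  · have h3 : Real.log r ≤ Real.log R := Real.log_le_log h hrR
    have h4 := mul_le_mul_of_nonneg_right h3 (sq_nonneg (r - 1))
    nlinarith [mul_le_mul_of_nonneg_left h1 (by linarith : (0:ℝ) ≤ 4 * r - 2)]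

/-- If all atoms of `p` have mass at least `m`, entropy is at most `3 + 2 log (1/m)` times the
variance of the square root. -/
lemma entropy_le_var {p f : (V → Fin q) → ℝ} (hp : ∀ σ, 0 ≤ p σ) (hp1 : ∑ σ, p σ = 1)
    (hf : ∀ σ, 0 ≤ f σ) {m : ℝ} (hm : 0 < m) (hm1 : m ≤ 1) (hpm : ∀ σ, p σ ≠ 0 → m ≤ p σ) :
    entropy p f ≤ (3 + 2 * Real.log (1 / m)) *
      (∑ σ, p σ * √(f σ) ^ 2 - (∑ σ, p σ * √(f σ)) ^ 2) := by
  set F := expec p f with hF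
  set s := ∑ σ, p σ * √(f σ) with hs
  have hF0 : 0 ≤ F := expec_nonneg hp hf
  have hs0 : 0 ≤ s := Finset.sum_nonneg fun σ _ => mul_nonneg (hp σ) (Real.sqrt_nonneg _)
  have hR : 1 ≤ 1 / m := by rw [le_div_iff₀ hm]; linarith
  have h1 : ∑ σ, p σ * √(f σ) ^ 2 = F := by
    rw [hF]; unfold expec
    exact Finset.sum_congr rfl fun σ _ => by rw [Real.sq_sqrt (hf σ)]
  have hle : ∀ σ, p σ * √(f σ) ≤ s := fun σ =>
    Finset.single_le_sum (f := fun σ => p σ * √(f σ))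
      (fun σ _ => mul_nonneg (hp σ) (Real.sqrt_nonneg _)) (Finset.mem_univ σ)
  unfold entropy
  rw [← hF]
  rcases hs0.eq_or_lt with h | h
  · have hz : ∀ σ, p σ * f σ = 0 := by
      intro σ
      have h2 : p σ * √(f σ) = 0 :=
        le_antisymm (h ▸ hle σ) (mul_nonneg (hp σ) (Real.sqrt_nonneg _))
      rw [← Real.sq_sqrt (hf σ), pow_two, ← mul_assoc, h2, zero_mul]
    have hFz : F = 0 := Finset.sum_eq_zero fun σ _ => hz σ
    rw [Finset.sum_eq_zero fun σ _ => by rw [hz σ, zero_mul], h1, hFz, ← h]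
    simp
  have hFpos : 0 < F := by
    refine lt_of_le_of_ne hF0 fun h' => h.ne' ?_
    refine Finset.sum_eq_zero fun σ _ => ?_
    have h2 : p σ * f σ = 0 := le_antisymm (h' ▸ Finset.single_le_sum (f := fun σ => p σ * f σ)
      (fun σ _ => mul_nonneg (hp σ) (hf σ)) (Finset.mem_univ σ)) (mul_nonneg (hp σ) (hf σ))
    rcases mul_eq_zero.1 h2 with h3 | h3 <;> simp [h3]
  set K := 3 + 2 * Real.log (1 / m) with hK
  -- The reference level `s ^ 2` replaces the mean `F`; the price is `F * log (s ^ 2 / F) ≤ s ^ 2 - F`.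
  have hpt : ∀ σ, p σ * f σ * Real.log (f σ / F) ≤
      K * (p σ * (√(f σ) - s) ^ 2) - s ^ 2 * p σ + s ^ 2 / F * (p σ * f σ) := by
    intro σ
    by_cases hpσ : p σ = 0
    · rw [hpσ]; simp
    have hpp : 0 < p σ := lt_of_le_of_ne (hp σ) (Ne.symm hpσ)
    have hr : √(f σ) / s ≤ 1 / m := by
      rw [div_le_div_iff₀ h hm, one_mul]
      have := mul_le_mul_of_nonneg_right (hpm σ hpσ) (Real.sqrt_nonneg (f σ))
      linarith [hle σ]
    have h2 := sq_log_le (div_nonneg (Real.sqrt_nonneg (f σ)) hs0) hr hR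
    have h3 := mul_le_mul_of_nonneg_left h2 (sq_nonneg s)
    have h4 : s ^ 2 * (K * (√(f σ) / s - 1) ^ 2) = K * (√(f σ) - s) ^ 2 := by
      field_simp
    rw [← hK, h4, div_pow, Real.sq_sqrt (hf σ)] at h3
    have h5 : s ^ 2 * (f σ / s ^ 2 * Real.log (f σ / s ^ 2) - f σ / s ^ 2 + 1) =
        f σ * Real.log (f σ / s ^ 2) - f σ + s ^ 2 := by field_simp
    rw [h5] at h3
    have h6 : f σ * Real.log (f σ / F) ≤ f σ * Real.log (f σ / s ^ 2) + (s ^ 2 / F * f σ - f σ) := by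
      rcases (hf σ).eq_or_lt with h' | h'
      · rw [← h']; simp
      have hl := Real.log_le_sub_one_of_pos (div_pos (pow_pos h 2) hFpos)
      rw [Real.log_div (pow_pos h 2).ne' hFpos.ne'] at hl
      rw [Real.log_div h'.ne' hFpos.ne', Real.log_div h'.ne' (pow_pos h 2).ne']
      have := mul_le_mul_of_nonneg_left hl h'.le
      nlinarith
    have h7 := mul_le_mul_of_nonneg_left (h6.trans (by linarith :
      f σ * Real.log (f σ / s ^ 2) + (s ^ 2 / F * f σ - f σ) ≤
        K * (√(f σ) - s) ^ 2 - s ^ 2 + s ^ 2 / F * f σ)) hpp.le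
    linarith
  have h5 := Finset.sum_le_sum fun σ (_ : σ ∈ Finset.univ) => hpt σ
  rw [Finset.sum_add_distrib, Finset.sum_sub_distrib, ← Finset.mul_sum, ← Finset.mul_sum,
    ← Finset.mul_sum, hp1, show ∑ σ, p σ * f σ = F from rfl, div_mul_cancel₀ _ hFpos.ne'] at h5
  have h6 : ∑ σ, p σ * (√(f σ) - s) ^ 2 = ∑ σ, p σ * √(f σ) ^ 2 - s ^ 2 := by
    calc _ = ∑ σ, (p σ * √(f σ) ^ 2 - 2 * s * (p σ * √(f σ)) + s ^ 2 * p σ) :=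
          Finset.sum_congr rfl fun σ _ => by ring
      _ = _ := by
          rw [Finset.sum_add_distrib, Finset.sum_sub_distrib, ← Finset.mul_sum,
            ← Finset.mul_sum, hp1, ← hs]
          ring
  rw [h6] at h5
  linarith

/-! ### Path comparison -/

lemma walk_abs_sub_le {α : Type*} {H : SimpleGraph α} (g : α → ℝ) {x y : α} (w : H.Walk x y) :
    |g x - g y| ≤ (w.darts.map fun d => |g d.fst - g d.snd|).sum := by
  induction w with
  | nil => simp
  | @cons a b' c h w ih =>
    simp only [SimpleGraph.Walk.darts_cons, List.map_cons, List.sum_cons]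
    exact (abs_sub_le (g a) (g b') (g c)).trans (by linarith)

/-- Cauchy–Schwarz along a simple path: the squared difference at the endpoints is at most the
number of vertices times the total squared variation over all (ordered) edges. -/
lemma sq_sub_le_of_reachable {α : Type*} [Fintype α] (H : SimpleGraph α)
    (g : α → ℝ) {x y : α} (hxy : H.Reachable x y) :
    (g x - g y) ^ 2 ≤ (Fintype.card α : ℝ) *
      ∑ a, ∑ b, if H.Adj a b then (g a - g b) ^ 2 else 0 := by
  obtain ⟨w, hw⟩ := hxy.exists_isPath
  have hnd : w.darts.Nodup :=
    List.Nodup.of_map _ (w.map_snd_darts ▸ hw.support_nodup.tail : (w.darts.map _).Nodup)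
  have h1 : |g x - g y| ≤ ∑ d ∈ w.darts.toFinset, |g d.fst - g d.snd| := by
    rw [List.sum_toFinset _ hnd]
    exact walk_abs_sub_le g w
  have h2 : (g x - g y) ^ 2 ≤ (w.darts.toFinset.card : ℝ) *
      ∑ d ∈ w.darts.toFinset, |g d.fst - g d.snd| ^ 2 := by
    rw [← sq_abs]
    exact (pow_le_pow_left₀ (abs_nonneg _) h1 2).trans sq_sum_le_card_mul_sum_sq
  have h3 : w.darts.toFinset.card ≤ Fintype.card α := by
    rw [List.toFinset_card_of_nodup hnd, SimpleGraph.Walk.length_darts]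
    exact hw.length_lt.le
  have h4 : ∑ d ∈ w.darts.toFinset, |g d.fst - g d.snd| ^ 2 ≤
      ∑ a, ∑ b, if H.Adj a b then (g a - g b) ^ 2 else 0 := by
    rw [← Finset.sum_product' (f := fun a b => if H.Adj a b then (g a - g b) ^ 2 else 0)]
    calc _ = ∑ d ∈ w.darts.toFinset, (fun p : α × α =>
          if H.Adj p.1 p.2 then (g p.1 - g p.2) ^ 2 else 0) d.toProd :=
          Finset.sum_congr rfl fun d _ => by
            dsimp only
            rw [if_pos d.adj, sq_abs]
      _ = ∑ p ∈ w.darts.toFinset.image (fun d => d.toProd),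
          (if H.Adj p.1 p.2 then (g p.1 - g p.2) ^ 2 else 0) := by
          rw [Finset.sum_image]
          exact fun d _ d' _ h => SimpleGraph.Dart.toProd_injective h
      _ ≤ _ := by
          refine Finset.sum_le_sum_of_subset_of_nonneg (fun p _ => by simp) fun p _ _ => ?_
          split_ifs <;> positivity
  refine h2.trans (mul_le_mul (by exact_mod_cast h3) h4 ?_ (by positivity))
  exact Finset.sum_nonneg fun _ _ => by positivity

/-! ### Local bound on a single block -/

/-- Expected squared change of `g` when vertex `v` of `σ` is resampled. -/
noncomputable def resampleVar (μ : (V → Fin q) → ℝ) (g : (V → Fin q) → ℝ) (v : V)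
    (σ : V → Fin q) : ℝ :=
  ∑ ρ, condDist μ {v} σ ρ * (g σ - g ρ) ^ 2

lemma resampleVar_nonneg {μ : (V → Fin q) → ℝ} (h0 : ∀ σ, 0 ≤ μ σ) (g : (V → Fin q) → ℝ) (v : V)
    (σ : V → Fin q) : 0 ≤ resampleVar μ g v σ :=
  Finset.sum_nonneg fun _ _ => mul_nonneg (condDist_nonneg h0 _ _ _) (sq_nonneg _)

/-- The single-site variance of `√f` is bounded by the single-site entropy of `f`; the factor `2`
is the ratio of the mean squared difference of two independent samples to the variance. -/
lemma sum_resampleVar_le {μ : (V → Fin q) → ℝ} (h0 : ∀ σ, 0 ≤ μ σ) {f : (V → Fin q) → ℝ}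
    (hf : ∀ σ, 0 ≤ f σ) (v : V) :
    ∑ σ, μ σ * resampleVar μ (fun ρ => √(f ρ)) v σ ≤ 2 * avgEnt μ {v} f := by
  rw [← sum_expec_condDist h0 {v}]
  unfold avgEnt
  rw [Finset.mul_sum]
  refine Finset.sum_le_sum fun τ _ => ?_
  rcases (h0 τ).eq_or_lt with h | h
  · rw [← h]; simp
  have h1 := var_le_entropy (condDist_nonneg h0 {v} τ) hf
  have h2 := sum_sum_sq_sub (condDist μ {v} τ) (fun ρ => √(f ρ)) (sum_condDist h0 {v} h)
  have h3 : expec (condDist μ {v} τ) (resampleVar μ (fun ρ => √(f ρ)) v) =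
      ∑ x, ∑ y, condDist μ {v} τ x * (condDist μ {v} τ y * (√(f x) - √(f y)) ^ 2) := by
    unfold expec
    refine Finset.sum_congr rfl fun x _ => ?_
    by_cases hx : condDist μ {v} τ x = 0
    · rw [hx]; simp
    · unfold resampleVar
      rw [condDist_congr μ (agree_of_condDist_ne hx), Finset.mul_sum]
  rw [h3, h2]
  nlinarith

lemma avgEnt_singleton_nonneg {μ : (V → Fin q) → ℝ} (h0 : ∀ σ, 0 ≤ μ σ) {f : (V → Fin q) → ℝ}
    (hf : ∀ σ, 0 ≤ f σ) (v : V) : 0 ≤ avgEnt μ {v} f := by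
  have h1 := sum_resampleVar_le h0 hf v
  have h2 : 0 ≤ ∑ σ, μ σ * resampleVar μ (fun ρ => √(f ρ)) v σ :=
    Finset.sum_nonneg fun σ _ => mul_nonneg (h0 σ) (resampleVar_nonneg h0 _ _ _)
  linarith

/-- Chaining the marginal bound over the vertices of `U`. -/
lemma pow_mul_prAgree_le {μ : (V → Fin q) → ℝ} (h0 : ∀ σ, 0 ≤ μ σ) {b : ℝ} (hb : 0 < b)
    (hmb : MarginallyBounded μ b) {σ : V → Fin q} (hσ : 0 < μ σ) (U : Finset V) :
    b ^ U.card * prAgree μ Uᶜ σ ≤ μ σ := by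
  induction U using Finset.induction_on with
  | empty =>
    rw [Finset.card_empty, pow_zero, one_mul, Finset.compl_empty]
    unfold prAgree
    rw [Finset.sum_eq_single σ]
    · simp
    · intro ρ _ hne
      rw [if_neg]
      exact fun h => hne (funext fun v => h v (Finset.mem_univ v))
    · exact fun h => absurd (Finset.mem_univ _) h
  | insert v U hv ih =>
    have hvL : v ∉ (insert v U)ᶜ := by simp
    have hins : insert v (insert v U)ᶜ = Uᶜ := by
      ext w
      simp only [Finset.mem_insert, Finset.mem_compl, not_or]
      constructor
      · rintro (rfl | h)
        · exact hv
        · exact h.2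
      · intro h
        by_cases hw : w = v
        · exact Or.inl hw
        · exact Or.inr ⟨hw, h⟩
    have hp1 : 0 < prAgree μ (insert v U)ᶜ σ := hσ.trans_le (le_prAgree h0 _ _)
    have hp2 : 0 < prAgree μ Uᶜ σ := hσ.trans_le (le_prAgree h0 _ _)
    have hcp : condProb μ (insert v U)ᶜ σ v (σ v) =
        prAgree μ Uᶜ σ / prAgree μ (insert v U)ᶜ σ := by
      unfold condProb
      rw [Function.update_eq_self, hins]
    have h1 := hmb (insert v U)ᶜ (fun h => hvL (h ▸ Finset.mem_univ v)) σ hp1 v hvL (σ v)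
      (hcp ▸ div_pos hp2 hp1)
    rw [hcp, le_div_iff₀ hp1] at h1
    rw [Finset.card_insert_of_notMem hv, pow_succ, mul_assoc]
    exact (mul_le_mul_of_nonneg_left h1 (by positivity)).trans ih

lemma pow_le_condDist {μ : (V → Fin q) → ℝ} (h0 : ∀ σ, 0 ≤ μ σ) {b : ℝ} (hb : 0 < b)
    (hmb : MarginallyBounded μ b) {U : Finset V} {σ τ : V → Fin q} (hσ : 0 < μ σ)
    (hst : ∀ v ∈ Uᶜ, σ v = τ v) : b ^ U.card ≤ condDist μ U τ σ := by
  rw [condDist_of_agree μ hst, ← agree_prAgree_eq μ hst,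
    le_div_iff₀ (hσ.trans_le (le_prAgree h0 _ _))]
  exact pow_mul_prAgree_le h0 hb hmb hσ U

/-- The Hamming graph on the feasible configurations with boundary condition `τ` outside `U`. -/
def feasGraph (μ : (V → Fin q) → ℝ) (U : Finset V) (τ : V → Fin q) :
    SimpleGraph {σ : V → Fin q // 0 < μ σ ∧ ∀ v ∈ Uᶜ, σ v = τ v} where
  Adj a c := HammingAdj a.1 c.1
  symm := ⟨fun a c h => by
    obtain ⟨v, hv, hu⟩ := h
    exact ⟨v, hv.symm, fun w hw => hu w hw.symm⟩⟩
  loopless := ⟨fun a h => by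
    obtain ⟨v, hv, -⟩ := h
    exact hv rfl⟩

/-- Crude tensorization on a block `U`: entropy is compared to the variance of `√f`, and the
variance to the single-site variances along simple paths of feasible configurations. There are at
most `b^(-|U|)` such configurations, each of conditional mass at least `b^|U|`. -/
lemma avgEnt_le_sum_resampleVar {μ : (V → Fin q) → ℝ} (h0 : ∀ σ, 0 ≤ μ σ) {b : ℝ} (hb : 0 < b)
    (hb1 : b < 1) (hmb : MarginallyBounded μ b) (htc : TotallyConnected μ)
    {f : (V → Fin q) → ℝ} (hf : ∀ σ, 0 ≤ f σ) {U : Finset V} (hU : U.Nonempty) :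
    avgEnt μ U f ≤ (3 + 2 * Real.log (1 / b ^ U.card)) / (2 * b ^ (2 * U.card + 1)) *
      ∑ v ∈ U, ∑ σ, μ σ * resampleVar μ (fun ρ => √(f ρ)) v σ := by
  set g : (V → Fin q) → ℝ := fun ρ => √(f ρ) with hg
  set m : ℝ := b ^ U.card with hm
  have hm0 : 0 < m := by positivity
  have hm1 : m ≤ 1 := pow_le_one₀ hb.le hb1.le
  set K : ℝ := 3 + 2 * Real.log (1 / m) with hK
  have hK0 : 0 ≤ K := by
    have : 0 ≤ Real.log (1 / m) := Real.log_nonneg (by rw [le_div_iff₀ hm0]; linarith)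
    linarith
  have hbm : b ^ (2 * U.card + 1) = m * (m * b) := by rw [hm]; ring
  have hloc : ∀ τ, 0 < μ τ → entropy (condDist μ U τ) f ≤
      K / (2 * (m * (m * b))) * ∑ v ∈ U, expec (condDist μ U τ) (resampleVar μ g v) := by
    intro τ hτ
    set p := condDist μ U τ with hp
    have hp0 : ∀ σ, 0 ≤ p σ := condDist_nonneg h0 U τ
    have hp1 : ∑ σ, p σ = 1 := sum_condDist h0 U hτ
    have hpm : ∀ σ, p σ ≠ 0 → m ≤ p σ := fun σ hσ =>
      pow_le_condDist h0 hb hmb (pos_of_condDist_ne h0 hσ) (agree_of_condDist_ne hσ)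
    have h1 := entropy_le_var hp0 hp1 hf hm0 hm1 hpm
    have h2 := sum_sum_sq_sub p g hp1
    set N : ℝ := (Fintype.card {σ : V → Fin q // 0 < μ σ ∧ ∀ v ∈ Uᶜ, σ v = τ v} : ℝ) with hN
    set D : ℝ := ∑ a : {σ : V → Fin q // 0 < μ σ ∧ ∀ v ∈ Uᶜ, σ v = τ v},
      ∑ c : {σ : V → Fin q // 0 < μ σ ∧ ∀ v ∈ Uᶜ, σ v = τ v},
      if (feasGraph μ U τ).Adj a c then (g a.1 - g c.1) ^ 2 else 0 with hD
    have hD0 : 0 ≤ D := Finset.sum_nonneg fun a _ => Finset.sum_nonneg fun c _ => by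
      split_ifs <;> positivity
    have hpair : ∀ x y, p x ≠ 0 → p y ≠ 0 → (g x - g y) ^ 2 ≤ N * D := by
      intro x y hx hy
      have hxa := agree_of_condDist_ne hx
      have hya := agree_of_condDist_ne hy
      have hxp := pos_of_condDist_ne h0 hx
      have hyp := pos_of_condDist_ne h0 hy
      have hpath := htc U hU τ (hτ.trans_le (le_prAgree h0 _ _)) x y hxp hxa hyp hya
      have hreach : ∀ z, Relation.ReflTransGen
          (fun a b => HammingAdj a b ∧ 0 < μ b ∧ ∀ v ∈ Uᶜ, b v = τ v) x z →
          ∃ hz : 0 < μ z ∧ ∀ v ∈ Uᶜ, z v = τ v,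
            (feasGraph μ U τ).Reachable ⟨x, hxp, hxa⟩ ⟨z, hz⟩ := by
        intro z hz
        induction hz with
        | refl => exact ⟨⟨hxp, hxa⟩, SimpleGraph.Reachable.refl _⟩
        | @tail z w _ hzw ih =>
          obtain ⟨hz, hr⟩ := ih
          refine ⟨hzw.2, hr.trans (SimpleGraph.Adj.reachable ?_)⟩
          exact hzw.1
      obtain ⟨hy', hr⟩ := hreach y hpath
      exact sq_sub_le_of_reachable (feasGraph μ U τ) (fun a => g a.1) hr
    have h3 : ∑ x, ∑ y, p x * (p y * (g x - g y) ^ 2) ≤ N * D := by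
      calc _ ≤ ∑ x, ∑ y, p x * (p y * (N * D)) := by
            refine Finset.sum_le_sum fun x _ => Finset.sum_le_sum fun y _ => ?_
            by_cases hx : p x = 0
            · rw [hx]; simp
            by_cases hy : p y = 0
            · rw [hy]; simp
            exact mul_le_mul_of_nonneg_left (mul_le_mul_of_nonneg_left (hpair x y hx hy) (hp0 y))
              (hp0 x)
        _ = N * D := by
            simp_rw [← Finset.mul_sum, ← Finset.sum_mul]
            rw [hp1]; ring
    have hsub : ∀ F : (V → Fin q) → ℝ, (∀ x, 0 ≤ F x) →
        ∑ a : {σ : V → Fin q // 0 < μ σ ∧ ∀ v ∈ Uᶜ, σ v = τ v}, F a.1 ≤ ∑ x, F x := by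
      intro F hF
      rw [← Finset.sum_subtype (Finset.univ.filter
        (fun σ : V → Fin q => 0 < μ σ ∧ ∀ v ∈ Uᶜ, σ v = τ v))
        (fun x => by rw [Finset.mem_filter]; simp) F]
      exact Finset.sum_le_sum_of_subset_of_nonneg (Finset.filter_subset _ _) fun σ _ _ => hF σ
    have h4 : N * m ≤ 1 := by
      rw [← hp1, hN, ← nsmul_eq_mul, ← Finset.card_univ, ← Finset.sum_const]
      calc _ ≤ ∑ a : {σ : V → Fin q // 0 < μ σ ∧ ∀ v ∈ Uᶜ, σ v = τ v}, p a.1 :=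
            Finset.sum_le_sum fun a _ => pow_le_condDist h0 hb hmb a.2.1 a.2.2
        _ ≤ _ := hsub p hp0
    have h5 : (m * b) * D ≤ ∑ v ∈ U, expec p (resampleVar μ g v) := by
      have hT : ∑ v ∈ U, expec p (resampleVar μ g v) =
          ∑ x, ∑ y, ∑ v ∈ U, p x * (condDist μ {v} x y * (g x - g y) ^ 2) := by
        unfold expec resampleVar
        rw [Finset.sum_comm]
        refine Finset.sum_congr rfl fun x _ => ?_
        rw [Finset.sum_comm]
        refine Finset.sum_congr rfl fun v _ => ?_
        rw [Finset.mul_sum]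
      have hnn : ∀ x y v, 0 ≤ p x * (condDist μ {v} x y * (g x - g y) ^ 2) := fun x y v =>
        mul_nonneg (hp0 x) (mul_nonneg (condDist_nonneg h0 _ _ _) (sq_nonneg _))
      rw [hT]
      refine le_trans ?_ (hsub _ fun x => Finset.sum_nonneg fun y _ =>
        Finset.sum_nonneg fun v _ => hnn x y v)
      rw [hD, Finset.mul_sum]
      refine Finset.sum_le_sum fun a _ => ?_
      refine le_trans ?_ (hsub _ fun y => Finset.sum_nonneg fun v _ => hnn a.1 y v)
      rw [Finset.mul_sum]
      refine Finset.sum_le_sum fun c _ => ?_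
      by_cases hac : (feasGraph μ U τ).Adj a c
      · rw [if_pos hac]
        obtain ⟨v, hv, huniq⟩ := hac
        have hvU : v ∈ U := by
          by_contra hvU
          have hv' := Finset.mem_compl.2 hvU
          exact hv ((a.2.2 v hv').trans (c.2.2 v hv').symm)
        refine le_trans ?_ (Finset.single_le_sum (f := fun v =>
          p a.1 * (condDist μ {v} a.1 c.1 * (g a.1 - g c.1) ^ 2))
          (fun v _ => hnn a.1 c.1 v) hvU)
        have e1 : m ≤ p a.1 := pow_le_condDist h0 hb hmb a.2.1 a.2.2
        have e2 : b ≤ condDist μ {v} a.1 c.1 := by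
          have := pow_le_condDist (U := {v}) (σ := c.1) (τ := a.1) h0 hb hmb c.2.1 (by
            intro w hw
            by_contra hne
            have := huniq w (Ne.symm hne)
            simp [this] at hw)
          simpa using this
        rw [← mul_assoc]
        exact mul_le_mul_of_nonneg_right (mul_le_mul e1 e2 hb.le (hp0 _)) (sq_nonneg _)
      · rw [if_neg hac, mul_zero]
        exact Finset.sum_nonneg fun v _ => hnn a.1 c.1 v
    set T := ∑ v ∈ U, expec p (resampleVar μ g v) with hT
    set W := ∑ σ, p σ * √(f σ) ^ 2 - (∑ σ, p σ * √(f σ)) ^ 2 with hW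
    have h6 : 2 * W ≤ N * D := by rw [← h2]; exact h3
    have h7 : 2 * (m * (m * b)) * W ≤ T := by
      calc 2 * (m * (m * b)) * W = (m * (m * b)) * (2 * W) := by ring
        _ ≤ (m * (m * b)) * (N * D) := mul_le_mul_of_nonneg_left h6 (by positivity)
        _ = (N * m) * ((m * b) * D) := by ring
        _ ≤ 1 * ((m * b) * D) := mul_le_mul_of_nonneg_right h4 (by positivity)
        _ ≤ T := by rw [one_mul]; exact h5
    calc _ ≤ K * W := h1
      _ = K / (2 * (m * (m * b))) * (2 * (m * (m * b)) * W) := by field_simp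
      _ ≤ _ := mul_le_mul_of_nonneg_left h7 (by positivity)
  rw [hbm]
  have hfin : ∑ v ∈ U, ∑ σ, μ σ * resampleVar μ g v σ =
      ∑ τ, μ τ * ∑ v ∈ U, expec (condDist μ U τ) (resampleVar μ g v) := by
    simp_rw [Finset.mul_sum]
    refine Eq.trans ?_ Finset.sum_comm
    exact Finset.sum_congr rfl fun v _ => (sum_expec_condDist h0 U _).symm
  rw [hfin, Finset.mul_sum]
  unfold avgEnt
  refine Finset.sum_le_sum fun τ _ => ?_
  rcases (h0 τ).eq_or_lt with h | h
  · rw [← h]; simp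
  · have := mul_le_mul_of_nonneg_left (hloc τ h) h.le
    linarith

/-! ### Averaging over blocks -/

/-- Group the blocks `S` by the component `U` of `v` in `S`, and drop every condition on `S` except
`U ⊆ S`. -/
lemma sum_weight_compIn_le (G : SimpleGraph V) {M : ℕ → ℝ} (hM : ∀ k, 0 ≤ M k) (ℓ : ℕ) (v : V) :
    ∑ S ∈ Finset.powersetCard ℓ (Finset.univ : Finset V),
        (if v ∈ S then M (compIn G S v).card else 0) ≤
      ∑ U : Finset V, if (v ∈ U ∧ compIn G U v = U) ∧ U.card ≤ ℓ then
        M U.card * ((Fintype.card V - U.card).choose (ℓ - U.card) : ℝ) else 0 := by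
  calc _ ≤ ∑ S ∈ Finset.powersetCard ℓ (Finset.univ : Finset V), ∑ U : Finset V,
        (if ((v ∈ U ∧ compIn G U v = U) ∧ U.card ≤ ℓ) ∧ U ⊆ S then M U.card else 0) := by
        refine Finset.sum_le_sum fun S hS => ?_
        have hnn : ∀ U : Finset V, 0 ≤
            (if ((v ∈ U ∧ compIn G U v = U) ∧ U.card ≤ ℓ) ∧ U ⊆ S then M U.card else 0) := by
          intro U
          split_ifs
          · exact hM _
          · exact le_rfl
        by_cases hv : v ∈ S
        · rw [if_pos hv]
          have hsub : compIn G S v ⊆ S := compIn_subset hv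
          have hcard : (compIn G S v).card ≤ ℓ :=
            (Finset.card_le_card hsub).trans (Finset.mem_powersetCard.1 hS).2.le
          refine le_trans ?_ (Finset.single_le_sum (fun U _ => hnn U)
            (Finset.mem_univ (compIn G S v)))
          rw [if_pos ⟨⟨⟨self_mem_compIn G S v, compIn_idem⟩, hcard⟩, hsub⟩]
        · rw [if_neg hv]
          exact Finset.sum_nonneg fun U _ => hnn U
    _ ≤ _ := by
        rw [Finset.sum_comm]
        refine Finset.sum_le_sum fun U _ => ?_
        by_cases hP : (v ∈ U ∧ compIn G U v = U) ∧ U.card ≤ ℓ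
        · simp only [hP, true_and, if_true, and_self]
          rw [← Finset.sum_filter, Finset.sum_const, nsmul_eq_mul, mul_comm]
          exact mul_le_mul_of_nonneg_left (by exact_mod_cast card_filter_superset_le U ℓ) (hM _)
        · rw [if_neg hP]
          refine (Finset.sum_eq_zero fun S _ => ?_).le
          rw [if_neg fun h => hP h.1]

/-- The local constant of a component of size `k + 1` times the decay `(2θ)^k` of its appearance
probability. Half of the decay pays for the polynomial factor `k + 1 ≤ 2^k`. -/
lemma local_const_mul_pow_le {b θ : ℝ} {Δ : ℕ} (hΔ : 3 ≤ Δ) (hb : 0 < b) (hb2 : b ≤ 1 / 2)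
    (hθ0 : 0 < θ) (hθ : θ ≤ b ^ 2 / (12 * (Δ : ℝ))) (k : ℕ) :
    (3 + 2 * ((k + 1 : ℕ) : ℝ) * Real.log (1 / b)) / b ^ (2 * (k + 1) + 1) * (2 * θ) ^ k ≤
      7 * Real.log (1 / b) / b ^ 3 * (1 / (3 * (Δ : ℝ))) ^ k := by
  have hΔ0 : (0 : ℝ) < Δ := by exact_mod_cast (by omega : 0 < Δ)
  set L := Real.log (1 / b) with hL
  have hL2 : 0.69 ≤ L := by
    have h1 : Real.log 2 ≤ L := Real.log_le_log (by norm_num) (by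
      rw [le_div_iff₀ hb]; linarith)
    have := Real.log_two_gt_d9
    linarith
  have hk : ((k + 1 : ℕ) : ℝ) ≤ 2 ^ k := by exact_mod_cast Nat.lt_two_pow_self (n := k)
  have hk1 : (1 : ℝ) ≤ 2 ^ k := one_le_pow₀ (by norm_num)
  have hnum : 3 + 2 * ((k + 1 : ℕ) : ℝ) * L ≤ 7 * L * 2 ^ k := by
    have h1 : ((k + 1 : ℕ) : ℝ) * L ≤ 2 ^ k * L := mul_le_mul_of_nonneg_right hk (by linarith)
    have h2 : L ≤ L * 2 ^ k := le_mul_of_one_le_right (by linarith) hk1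
    nlinarith
  have hpow : (2 * θ) ^ k ≤ (b ^ 2 * (1 / 2) * (1 / (3 * (Δ : ℝ)))) ^ k := by
    refine pow_le_pow_left₀ (by linarith) ?_ k
    calc 2 * θ ≤ 2 * (b ^ 2 / (12 * (Δ : ℝ))) := by linarith
      _ = _ := by field_simp; norm_num
  calc _ ≤ 7 * L * 2 ^ k / b ^ (2 * (k + 1) + 1) *
        (b ^ 2 * (1 / 2) * (1 / (3 * (Δ : ℝ)))) ^ k := by
        refine mul_le_mul ?_ hpow (by positivity) ?_
        · exact div_le_div_of_nonneg_right hnum (by positivity)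
        · exact div_nonneg (by nlinarith) (by positivity)
    _ = _ := by
        rw [mul_pow, mul_pow, ← pow_mul, div_pow (1 : ℝ) 2, one_pow,
          show 2 * (k + 1) + 1 = 2 * k + 3 by ring, pow_add]
        field_simp

/-- A uniformly random `ℓ`-block gives each vertex total expected weight at most
`(ℓ/n) · 18 log(1/b) / b⁴`, where a vertex is weighted by the local constant of its component. -/
lemma sum_weight_le (G : SimpleGraph V) [DecidableRel G.Adj] {Δ : ℕ} (hΔ : 3 ≤ Δ)
    (hdeg : ∀ v, G.degree v ≤ Δ) {b θ : ℝ} (hb : 0 < b) (hb2 : b ≤ 1 / 2)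
    (hθ0 : 0 < θ) (hθ : θ ≤ b ^ 2 / (12 * (Δ : ℝ))) {ℓ : ℕ}
    (hl1 : (ℓ : ℝ) - 1 ≤ θ * Fintype.card V) (hln : ℓ ≤ Fintype.card V) (v : V) :
    ∑ S ∈ Finset.powersetCard ℓ (Finset.univ : Finset V), (if v ∈ S then
        (3 + 2 * ((compIn G S v).card : ℝ) * Real.log (1 / b)) /
          b ^ (2 * (compIn G S v).card + 1) else 0) ≤
      ((Fintype.card V).choose ℓ : ℝ) * ((ℓ : ℝ) / Fintype.card V) *
        (18 * Real.log (1 / b) / b ^ 4) := by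
  have hΔ3 : (3 : ℝ) ≤ Δ := by exact_mod_cast hΔ
  have hL0 : 0 ≤ Real.log (1 / b) := Real.log_nonneg (by rw [le_div_iff₀ hb]; linarith)
  set L := Real.log (1 / b) with hL
  set n := Fintype.card V with hn
  set y : ℝ := 1 / (3 * (Δ : ℝ)) with hy
  have hy0 : 0 ≤ y := by positivity
  set K : ℝ := (n.choose ℓ : ℝ) * ((ℓ : ℝ) / n) with hK
  have hK0 : 0 ≤ K := by positivity
  have hθ4 : θ ≤ 1 / 4 := by
    refine hθ.trans ?_
    rw [div_le_iff₀ (by positivity)]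
    nlinarith
  -- with `c = 1 + 1/Δ`, the tree generating function is at most `c ^ Δ ≤ e < 3`
  have hc3 : (1 + 1 / (Δ : ℝ)) ^ Δ ≤ 3 := by
    have h1 : (1 + 1 / (Δ : ℝ)) ^ Δ ≤ (Real.exp (1 / (Δ : ℝ))) ^ Δ :=
      pow_le_pow_left₀ (by positivity) (by linarith [Real.add_one_le_exp (1 / (Δ : ℝ))]) _
    rw [← Real.exp_nat_mul, mul_one_div_cancel (by positivity)] at h1
    linarith [Real.exp_one_lt_d9]
  have hc1 : (1 : ℝ) ≤ 1 + 1 / (Δ : ℝ) := by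
    have : (0 : ℝ) ≤ 1 / (Δ : ℝ) := by positivity
    linarith
  have hcy : 1 + y * (1 + 1 / (Δ : ℝ)) ^ (Δ - 1) ≤ 1 + 1 / (Δ : ℝ) := by
    have h1 : (1 + 1 / (Δ : ℝ)) ^ (Δ - 1) ≤ 3 :=
      (pow_le_pow_right₀ hc1 (Nat.sub_le _ _)).trans hc3
    have h2 := mul_le_mul_of_nonneg_left h1 hy0
    have h3 : y * 3 = 1 / (Δ : ℝ) := by rw [hy]; field_simp
    linarith
  have hconn := (sum_connected_le G (by omega) hdeg hc1 hy0 hcy v).trans hc3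
  refine (sum_weight_compIn_le G
    (M := fun k => (3 + 2 * (k : ℝ) * L) / b ^ (2 * k + 1)) (fun k => by positivity) ℓ v).trans ?_
  calc _ ≤ ∑ U : Finset V, K * (7 * L / b ^ 3) *
        (if v ∈ U ∧ compIn G U v = U then y ^ (U.card - 1) else 0) := by
        refine Finset.sum_le_sum fun U _ => ?_
        by_cases hP : v ∈ U ∧ compIn G U v = U
        · by_cases hUl : U.card ≤ ℓ
          · rw [if_pos ⟨hP, hUl⟩, if_pos hP]
            obtain ⟨k, hk⟩ : ∃ k, U.card = k + 1 :=
              ⟨U.card - 1, (Nat.sub_add_cancel (Finset.card_pos.2 ⟨v, hP.1⟩)).symm⟩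
            have h1 := choose_ratio_le hθ0.le hθ4 hl1 hln k (hk ▸ hUl)
            have h2 := local_const_mul_pow_le hΔ hb hb2 hθ0 hθ k
            rw [hk, Nat.add_sub_cancel]
            calc _ ≤ (3 + 2 * ((k + 1 : ℕ) : ℝ) * L) / b ^ (2 * (k + 1) + 1) *
                  (K * (2 * θ) ^ k) := mul_le_mul_of_nonneg_left h1 (by positivity)
              _ = K * ((3 + 2 * ((k + 1 : ℕ) : ℝ) * L) / b ^ (2 * (k + 1) + 1) *
                  (2 * θ) ^ k) := by ring
              _ ≤ K * (7 * L / b ^ 3 * y ^ k) := mul_le_mul_of_nonneg_left h2 hK0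
              _ = _ := by ring
          · rw [if_neg fun h => hUl h.2, if_pos hP]
            positivity
        · rw [if_neg fun h => hP h.1, if_neg hP, mul_zero]
    _ ≤ K * (7 * L / b ^ 3) * 3 := by
        rw [← Finset.mul_sum]
        exact mul_le_mul_of_nonneg_left hconn (by positivity)
    _ ≤ _ := by
        rw [mul_assoc]
        refine mul_le_mul_of_nonneg_left ?_ hK0
        rw [div_mul_eq_mul_div, div_le_div_iff₀ (by positivity) (by positivity)]
        have h3 : 0 ≤ L * b ^ 3 := by positivity
        calc 7 * L * 3 * b ^ 4 = 21 * b * (L * b ^ 3) := by ring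
          _ ≤ 18 * (L * b ^ 3) := mul_le_mul_of_nonneg_right (by linarith) h3
          _ = _ := by ring

/-! ### Degenerate blocks -/

lemma condDist_univ {μ : (V → Fin q) → ℝ} (h1 : ∑ σ, μ σ = 1) (τ : V → Fin q) :
    condDist μ Finset.univ τ = μ := by
  funext σ
  simp [condDist, prAgree, h1]

lemma avgEnt_univ {μ : (V → Fin q) → ℝ} (h1 : ∑ σ, μ σ = 1) (f : (V → Fin q) → ℝ) :
    avgEnt μ Finset.univ f = entropy μ f := by
  unfold avgEnt
  simp_rw [condDist_univ h1]
  rw [← Finset.sum_mul, h1, one_mul]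

lemma avgEnt_empty {μ : (V → Fin q) → ℝ} (h0 : ∀ σ, 0 ≤ μ σ) (f : (V → Fin q) → ℝ) :
    avgEnt μ ∅ f = 0 := by
  rw [avgEnt_eq h0]
  refine Finset.sum_eq_zero fun σ _ => ?_
  rcases (h0 σ).eq_or_lt with h | h
  · rw [← h, zero_mul]
  have hne : ∀ ρ, ρ ≠ σ → condDist μ ∅ σ ρ = 0 := by
    intro ρ hρ
    by_contra hc
    exact hρ (funext fun v => agree_of_condDist_ne hc v (by simp))
  have hself : condDist μ ∅ σ σ = 1 := by
    rw [← sum_condDist h0 ∅ h]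
    exact (Finset.sum_eq_single σ (fun ρ _ hρ => hne ρ hρ)
      (fun hc => absurd (Finset.mem_univ _) hc)).symm
  have : expec (condDist μ ∅ σ) f = f σ := by
    unfold expec
    rw [Finset.sum_eq_single σ (fun ρ _ hρ => by rw [hne ρ hρ, zero_mul])
      (fun hc => absurd (Finset.mem_univ _) hc), hself, one_mul]
  rw [this]
  by_cases hf : f σ = 0
  · rw [hf, zero_mul, mul_zero]
  · rw [div_self hf, Real.log_one, mul_zero, mul_zero]

/-- If `b > 1/2` then no vertex has two feasible spins, so resampling changes nothing. -/
lemma resampleVar_eq_zero {μ : (V → Fin q) → ℝ} (h0 : ∀ σ, 0 ≤ μ σ) {b : ℝ} (hb : 1 / 2 < b)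
    (hmb : MarginallyBounded μ b) (g : (V → Fin q) → ℝ) (v : V) {σ : V → Fin q} (hσ : 0 < μ σ) :
    resampleVar μ g v σ = 0 := by
  refine Finset.sum_eq_zero fun ρ _ => ?_
  by_cases hρ : condDist μ {v} σ ρ = 0
  · rw [hρ, zero_mul]
  by_cases hρσ : ρ = σ
  · rw [hρσ, sub_self]; simp
  exfalso
  have hb0 : 0 < b := by linarith
  have e1 : b ≤ condDist μ {v} σ ρ := by
    simpa using pow_le_condDist (U := {v}) h0 hb0 hmb (pos_of_condDist_ne h0 hρ)
      (agree_of_condDist_ne hρ)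
  have e2 : b ≤ condDist μ {v} σ σ := by
    simpa using pow_le_condDist (U := {v}) (τ := σ) h0 hb0 hmb hσ (fun _ _ => rfl)
  have e3 : condDist μ {v} σ ρ + condDist μ {v} σ σ ≤ 1 := by
    rw [← sum_condDist h0 {v} hσ, ← Finset.sum_pair hρσ]
    exact Finset.sum_le_sum_of_subset_of_nonneg (Finset.subset_univ _)
      fun x _ _ => condDist_nonneg h0 _ _ _
  linarith

end Helpers

/-- **Approximate tensorization via uniform block factorization:** for a totally-connected,
`b`-marginally bounded Gibbs distribution on a graph of maximum degree at most `Δ`, if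
`μ` satisfies `⌈θn⌉`-uniform block factorization of entropy with constant `C` for some
`0 < θ ≤ b²/(12Δ)`, then `μ` satisfies approximate tensorization of entropy with constant
`C₁ = (18·log(1/b)/b⁴)·C`. -/
theorem approx_tensorization_of_block_factorization
    (Δ : ℕ) (hΔ : 3 ≤ Δ) (b : ℝ) (hb0 : 0 < b) (hb1 : b < 1)
    {V : Type} [Fintype V] [DecidableEq V] {q : ℕ} (hq : 2 ≤ q)
    (G : SimpleGraph V) [DecidableRel G.Adj] (hdeg : ∀ v : V, G.degree v ≤ Δ)
    (A : Fin q → Fin q → ℝ) (hA0 : ∀ i j, 0 ≤ A i j) (hAsymm : ∀ i j, A i j = A j i)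
    (h : Fin q → ℝ) (hh : ∀ i, 0 < h i)
    (hZ : 0 < ∑ σ : V → Fin q, gibbsWeight G A hAsymm h σ)
    (μ : (V → Fin q) → ℝ)
    (hμ : ∀ σ, μ σ =
      gibbsWeight G A hAsymm h σ / ∑ σ' : V → Fin q, gibbsWeight G A hAsymm h σ')
    (htc : TotallyConnected μ) (hmb : MarginallyBounded μ b)
    (θ C : ℝ) (hθ0 : 0 < θ) (hθ : θ ≤ b ^ 2 / (12 * (Δ : ℝ))) (hC : 0 < C)
    (hubf : UniformBlockFactorization μ ⌈θ * (Fintype.card V : ℝ)⌉₊ C) :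
    ApproxTensorization μ (18 * Real.log (1 / b) / b ^ 4 * C) := by
  set Z := ∑ σ' : V → Fin q, gibbsWeight G A hAsymm h σ' with hZdef
  have h0 : ∀ σ, 0 ≤ μ σ := by
    intro σ
    rw [hμ]
    refine div_nonneg (mul_nonneg (Finset.prod_nonneg fun e _ => ?_)
      (Finset.prod_nonneg fun v _ => (hh _).le)) hZ.le
    induction e using Sym2.ind with
    | _ x y => exact hA0 _ _
  have h1 : ∑ σ, μ σ = 1 := by
    simp_rw [hμ]
    rw [← Finset.sum_div]
    exact div_self hZ.ne'
  intro f hf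
  have hs0 : ∀ v, 0 ≤ avgEnt μ {v} f := avgEnt_singleton_nonneg h0 hf
  have hL0 : 0 < Real.log (1 / b) := Real.log_pos (by rw [lt_div_iff₀ hb0]; linarith)
  have hR0 : 0 ≤ 18 * Real.log (1 / b) / b ^ 4 * C * ∑ v, avgEnt μ {v} f :=
    mul_nonneg (by positivity) (Finset.sum_nonneg fun v _ => hs0 v)
  rcases (Finset.univ : Finset V).eq_empty_or_nonempty with hV | hV
  · refine le_trans (le_of_eq ?_) hR0
    rw [← avgEnt_univ h1, hV, avgEnt_empty h0]
  have hloc := fun {U : Finset V} (hU : U.Nonempty) =>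
    avgEnt_le_sum_resampleVar h0 hb0 hb1 hmb htc hf hU
  -- for `b > 1/2` every spin is frozen given the others, so the entropy vanishes; the assumption
  -- `b ≤ 1/2` is what makes `21 log(1/b) / b³ ≤ 18 log(1/b) / b⁴` at the end
  rcases lt_or_ge (1 / 2) b with hb2 | hb2
  · refine le_trans ?_ hR0
    rw [← avgEnt_univ h1]
    refine (hloc hV).trans (le_of_eq ?_)
    refine mul_eq_zero_of_right _ (Finset.sum_eq_zero fun v _ => Finset.sum_eq_zero fun σ _ => ?_)
    rcases (h0 σ).eq_or_lt with h' | h'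
    · rw [← h', zero_mul]
    · rw [resampleVar_eq_zero h0 hb2 hmb _ v h', mul_zero]
  set n := Fintype.card V with hn
  have hn0 : 0 < n := Finset.card_pos.2 hV
  have hn0' : (0 : ℝ) < n := by exact_mod_cast hn0
  set ℓ := ⌈θ * (n : ℝ)⌉₊ with hℓ
  have hℓ0 : 0 < ℓ := Nat.ceil_pos.2 (by positivity)
  have hℓ0' : (0 : ℝ) < ℓ := by exact_mod_cast hℓ0
  have hl1 : (ℓ : ℝ) - 1 ≤ θ * n := by
    linarith [Nat.ceil_lt_add_one (show 0 ≤ θ * (n : ℝ) by positivity)]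
  have hθ1 : θ ≤ 1 := by
    refine hθ.trans ?_
    have : (3 : ℝ) ≤ Δ := by exact_mod_cast hΔ
    rw [div_le_iff₀ (by positivity)]
    nlinarith
  have hln : ℓ ≤ n := Nat.ceil_le.2 (by nlinarith)
  have hsub : ∀ S T : Finset V, Disjoint S T → (∀ x ∈ S, ∀ y ∈ T, ¬ G.Adj x y) →
      avgEnt μ (S ∪ T) f ≤ avgEnt μ S f + avgEnt μ T f := by
    intro S T hST hno
    refine avgEnt_le_add_of_comp h0 Finset.subset_union_left hf fun τ hτ =>
      expec_condDist_comp h0 hST (fun σ ρ hσρ => ?_) f hτ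
    rw [hμ, hμ, hμ, hμ, div_mul_div_comm, div_mul_div_comm,
      gibbsWeight_four_point G A hAsymm h hno σ ρ hσρ]
  have hloc' : ∀ U : Finset V, U.Nonempty → avgEnt μ U f ≤
      (fun k : ℕ => (3 + 2 * (k : ℝ) * Real.log (1 / b)) / b ^ (2 * k + 1)) U.card *
        ∑ v ∈ U, avgEnt μ {v} f := by
    intro U hU
    have hlog : Real.log (1 / b ^ U.card) = (U.card : ℝ) * Real.log (1 / b) := by
      rw [← Real.log_pow, div_pow, one_pow]
    refine (hloc hU).trans ?_
    rw [hlog]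
    calc _ ≤ (3 + 2 * ((U.card : ℝ) * Real.log (1 / b))) / (2 * b ^ (2 * U.card + 1)) *
          ∑ v ∈ U, 2 * avgEnt μ {v} f :=
          mul_le_mul_of_nonneg_left
            (Finset.sum_le_sum fun v _ => sum_resampleVar_le h0 hf v) (by positivity)
      _ = _ := by
          rw [← Finset.mul_sum]
          field_simp
  have hS := le_sum_compIn G (fun S => avgEnt μ S f)
    (fun k : ℕ => (3 + 2 * (k : ℝ) * Real.log (1 / b)) / b ^ (2 * k + 1)) (fun v => avgEnt μ {v} f)
    (avgEnt_empty h0 f) hsub hloc'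
  have htot : ∑ S ∈ Finset.powersetCard ℓ (Finset.univ : Finset V), avgEnt μ S f ≤
      (n.choose ℓ : ℝ) * ((ℓ : ℝ) / n) * (18 * Real.log (1 / b) / b ^ 4) *
        ∑ v, avgEnt μ {v} f := by
    calc _ ≤ ∑ S ∈ Finset.powersetCard ℓ (Finset.univ : Finset V), ∑ v : V, (if v ∈ S then
          (3 + 2 * ((compIn G S v).card : ℝ) * Real.log (1 / b)) /
            b ^ (2 * (compIn G S v).card + 1) else 0) * avgEnt μ {v} f := by
          refine Finset.sum_le_sum fun S _ => (hS S).trans (le_of_eq ?_)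
          simp_rw [ite_mul, zero_mul]
          rw [Finset.sum_ite_mem, Finset.univ_inter]
      _ ≤ _ := by
          rw [Finset.sum_comm, Finset.mul_sum]
          refine Finset.sum_le_sum fun v _ => ?_
          rw [← Finset.sum_mul]
          exact mul_le_mul_of_nonneg_right
            (sum_weight_le G hΔ hdeg hb0 hb2 hθ0 hθ hl1 hln v) (hs0 v)
  have hmain : ((ℓ : ℝ) / n) * entropy μ f ≤ C * (n.choose ℓ : ℝ)⁻¹ *
      ∑ S ∈ Finset.powersetCard ℓ (Finset.univ : Finset V), avgEnt μ S f := hubf f hf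
  have hchoose : (0 : ℝ) < n.choose ℓ := by exact_mod_cast Nat.choose_pos hln
  have hfin : ((ℓ : ℝ) / n) * entropy μ f ≤ ((ℓ : ℝ) / n) *
      (18 * Real.log (1 / b) / b ^ 4 * C * ∑ v, avgEnt μ {v} f) := by
    refine hmain.trans ?_
    refine (mul_le_mul_of_nonneg_left htot (by positivity)).trans (le_of_eq ?_)
    field_simp
  exact le_of_mul_le_mul_left hfin (by positivity)
end

section
/- Let μ be a probability distribution on [q]^V with |V| = n and support Ω, and suppose μ satisfies the approximate tensorization of entropy with constant C₁ > 0. Then for every probability distribution ν on [q]^V supported on Ω, D_KL(νP_GL ‖ μ) ≤ (1 − 1/(C₁·n))·D_KL(ν ‖ μ), where νP_GL denotes the distribution (νP_GL)(σ') = Σ_{σ∈Ω} ν(σ)·P_GL(σ,σ') obtained after one step of the Glauber dynamics, and D_KL(ν‖μ) = Σ_{σ∈Ω} ν(σ)·log(ν(σ)/μ(σ)). -/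
/-!
Write `ν = μ f` with `f ≥ 0`. For each vertex `v` let `f_v = condMean μ f v` be the conditional
expectation of `f` given the spins outside `v`. One Glauber step sends `μ f` to `μ · (1/n) ∑_v f_v`
(`sum_mul_glauberMatrix`), so by convexity of `x log x` the divergence after the step is at most
the average over `v` of `∑ μ f_v log f_v`. The chain rule for entropy (`avgEnt_singleton`) says that
`∑ μ f_v log f_v = ∑ μ f log f - μ[Ent_v(f)]`. Averaging over `v` and applying approximate
tensorization to `∑_v μ[Ent_v(f)]` gives the contraction.
-/

open Finset

attribute [local instance] Classical.propDecidable

noncomputable section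

/-- The sum of `g` over all configurations that agree with `σ` off the vertex `v`. -/
def fiberSum {V : Type} [Fintype V] [DecidableEq V] {q : ℕ} (g : (V → Fin q) → ℝ) (v : V)
    (σ : V → Fin q) : ℝ :=
  ∑ τ : V → Fin q, if ∀ u, u ≠ v → τ u = σ u then g τ else 0

/-- The conditional expectation of `f` under `μ` given the spins outside `v`, as a function of the
whole configuration (with value `0` where the boundary condition is infeasible). -/
def condMean {V : Type} [Fintype V] [DecidableEq V] {q : ℕ} (μ f : (V → Fin q) → ℝ) (v : V)
    (σ : V → Fin q) : ℝ :=
  fiberSum (fun τ => μ τ * f τ) v σ / fiberSum μ v σ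

end

section

variable {V : Type} [Fintype V] [DecidableEq V] {q : ℕ}

/-! ### Fiber sums and conditional means -/

lemma sum_update_eq_fiberSum (g : (V → Fin q) → ℝ) (v : V) (σ : V → Fin q) :
    ∑ j : Fin q, g (Function.update σ v j) = fiberSum g v σ := by
  unfold fiberSum
  rw [← Finset.sum_filter]
  refine Finset.sum_bij' (fun j _ => Function.update σ v j) (fun τ _ => τ v) ?_ ?_ ?_ ?_ ?_
  · intro j _
    simp only [Finset.mem_filter, Finset.mem_univ, true_and]
    intro u hu
    simp [hu]
  · simp
  · simp
  · intro τ hτ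
    simp only [Finset.mem_filter, Finset.mem_univ, true_and] at hτ
    ext u
    by_cases hu : u = v
    · subst hu; simp
    · simp [hu, hτ u hu]
  · simp

lemma fiberSum_congr_left (g : (V → Fin q) → ℝ) (v : V) {σ τ : V → Fin q}
    (h : ∀ u, u ≠ v → τ u = σ u) : fiberSum g v τ = fiberSum g v σ := by
  unfold fiberSum
  refine Finset.sum_congr rfl fun ρ _ => ?_
  have : (∀ u, u ≠ v → ρ u = τ u) ↔ (∀ u, u ≠ v → ρ u = σ u) :=
    forall_congr' fun u => forall_congr' fun hu => by rw [h u hu]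
  simp only [this]

lemma condMean_congr (μ f : (V → Fin q) → ℝ) (v : V) {σ τ : V → Fin q}
    (h : ∀ u, u ≠ v → τ u = σ u) : condMean μ f v τ = condMean μ f v σ := by
  unfold condMean
  rw [fiberSum_congr_left _ v h, fiberSum_congr_left _ v h]

/-- Summing over fibers is self-adjoint, because agreement off `v` is a symmetric relation. -/
lemma sum_mul_fiberSum (a b : (V → Fin q) → ℝ) (v : V) :
    ∑ σ, a σ * fiberSum b v σ = ∑ σ, fiberSum a v σ * b σ := by
  unfold fiberSum
  simp only [Finset.mul_sum, Finset.sum_mul]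
  rw [Finset.sum_comm]
  refine Finset.sum_congr rfl fun σ _ => Finset.sum_congr rfl fun τ _ => ?_
  have : (∀ u, u ≠ v → τ u = σ u) ↔ (∀ u, u ≠ v → σ u = τ u) :=
    forall_congr' fun u => forall_congr' fun _ => eq_comm
  simp only [this]
  split_ifs <;> simp

lemma fiberSum_nonneg {g : (V → Fin q) → ℝ} (hg : ∀ σ, 0 ≤ g σ) (v : V) (σ : V → Fin q) :
    0 ≤ fiberSum g v σ := by
  unfold fiberSum
  refine Finset.sum_nonneg fun τ _ => ?_
  split_ifs
  · exact hg τ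
  · exact le_rfl

lemma le_fiberSum {g : (V → Fin q) → ℝ} (hg : ∀ σ, 0 ≤ g σ) (v : V) (σ : V → Fin q) :
    g σ ≤ fiberSum g v σ := by
  unfold fiberSum
  have h := Finset.single_le_sum (s := Finset.univ)
    (f := fun τ : V → Fin q => if ∀ u, u ≠ v → τ u = σ u then g τ else 0)
    (fun τ _ => by
      show (0 : ℝ) ≤ if _ then _ else _
      split_ifs
      · exact hg τ
      · exact le_rfl) (Finset.mem_univ σ)
  simpa using h

lemma prAgree_compl_singleton (μ : (V → Fin q) → ℝ) (v : V) (τ : V → Fin q) :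
    prAgree μ ({v}ᶜ) τ = fiberSum μ v τ := by
  unfold prAgree fiberSum
  simp

/-! ### The Glauber step and the chain rule for entropy -/

lemma klDiv_mul_left (μ g : (V → Fin q) → ℝ) :
    klDiv (fun σ => μ σ * g σ) μ = ∑ σ, μ σ * (g σ * Real.log (g σ)) := by
  unfold klDiv
  refine Finset.sum_congr rfl fun σ _ => ?_
  by_cases h : μ σ = 0
  · simp [h]
  · rw [mul_div_cancel_left₀ _ h, mul_assoc]

/-- One Glauber step replaces the density `f` by the average of its single-site conditional
expectations. -/
lemma sum_mul_glauberMatrix (μ f : (V → Fin q) → ℝ) (σ' : V → Fin q) :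
    ∑ σ, (μ σ * f σ) * glauberMatrix μ σ σ' =
      μ σ' * ∑ v : V, (Fintype.card V : ℝ)⁻¹ * condMean μ f v σ' := by
  simp only [glauberMatrix, Matrix.of_apply, sum_update_eq_fiberSum, Finset.mul_sum]
  rw [Finset.sum_comm]
  refine Finset.sum_congr rfl fun v _ => ?_
  unfold condMean
  rw [fiberSum.eq_def (fun τ => μ τ * f τ), Finset.sum_div, Finset.mul_sum, Finset.mul_sum]
  refine Finset.sum_congr rfl fun σ _ => ?_
  by_cases h : ∀ u, u ≠ v → σ u = σ' u
  · have h' : ∀ u, u ≠ v → σ' u = σ u := fun u hu => (h u hu).symm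
    rw [if_pos h, if_pos h', fiberSum_congr_left μ v h]
    ring
  · have h' : ¬ ∀ u, u ≠ v → σ' u = σ u := fun H => h fun u hu => (H u hu).symm
    rw [if_neg h, if_neg h']
    simp

lemma entropy_condDist_singleton (μ f : (V → Fin q) → ℝ) (v : V) (τ : V → Fin q) :
    entropy (condDist μ {v} τ) f =
      fiberSum (fun σ => μ σ * f σ * Real.log (f σ / condMean μ f v σ) / fiberSum μ v σ) v τ := by
  have hexp : expec (condDist μ {v} τ) f = condMean μ f v τ := by
    unfold expec condDist condMean
    rw [prAgree_compl_singleton, fiberSum.eq_def (fun τ => μ τ * f τ), Finset.sum_div]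
    refine Finset.sum_congr rfl fun σ _ => ?_
    simp only [Finset.mem_compl, Finset.mem_singleton]
    by_cases h : ∀ u, u ≠ v → σ u = τ u
    · rw [if_pos h, if_pos h]; ring
    · rw [if_neg h, if_neg h]; simp
  unfold entropy
  rw [hexp]
  unfold condDist
  rw [prAgree_compl_singleton]
  conv_rhs => rw [fiberSum.eq_def]
  refine Finset.sum_congr rfl fun σ _ => ?_
  simp only [Finset.mem_compl, Finset.mem_singleton]
  by_cases h : ∀ u, u ≠ v → σ u = τ u
  · rw [if_pos h, if_pos h, condMean_congr μ f v h, fiberSum_congr_left μ v h]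
    ring
  · rw [if_neg h, if_neg h]; simp

/-- The single-site conditional expectation has the same integral as `f` against any function of the
spins outside `v`; this is the case of the function `log f_v`. -/
lemma sum_condMean_mul_log {μ f : (V → Fin q) → ℝ} (hμ : ∀ σ, 0 ≤ μ σ) (v : V) :
    ∑ σ, μ σ * (condMean μ f v σ * Real.log (condMean μ f v σ)) =
      ∑ σ, μ σ * f σ * Real.log (condMean μ f v σ) := by
  have h1 : ∀ σ, μ σ * (condMean μ f v σ * Real.log (condMean μ f v σ)) =
      fiberSum (fun τ => μ τ * f τ) v σ *
        (μ σ * (Real.log (condMean μ f v σ) / fiberSum μ v σ)) := by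
    intro σ
    have h0 : condMean μ f v σ = fiberSum (fun τ => μ τ * f τ) v σ / fiberSum μ v σ := rfl
    generalize Real.log (condMean μ f v σ) = L
    rw [h0]
    ring
  rw [Finset.sum_congr rfl fun σ _ => h1 σ, ← sum_mul_fiberSum]
  refine Finset.sum_congr rfl fun σ _ => ?_
  have h2 : fiberSum (fun τ => μ τ * (Real.log (condMean μ f v τ) / fiberSum μ v τ)) v σ =
      fiberSum μ v σ * (Real.log (condMean μ f v σ) / fiberSum μ v σ) := by
    conv_lhs => rw [fiberSum.eq_def]
    conv_rhs => rw [fiberSum.eq_def μ v σ, Finset.sum_mul]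
    refine Finset.sum_congr rfl fun τ _ => ?_
    by_cases h : ∀ u, u ≠ v → τ u = σ u
    · rw [if_pos h, if_pos h, condMean_congr μ f v h, fiberSum_congr_left μ v h, fiberSum.eq_def μ v σ]
    · rw [if_neg h, if_neg h]; simp
  rw [h2]
  by_cases hσ : μ σ = 0
  · simp [hσ]
  · have hpos : 0 < fiberSum μ v σ :=
      ((hμ σ).lt_of_ne' hσ).trans_le (le_fiberSum hμ v σ)
    rw [mul_div_cancel₀ _ hpos.ne']

/-- The chain rule for entropy at a single site. -/
lemma avgEnt_singleton {μ f : (V → Fin q) → ℝ} (hμ : ∀ σ, 0 ≤ μ σ) (hf : ∀ σ, 0 ≤ f σ) (v : V) :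
    avgEnt μ {v} f = ∑ σ, μ σ * (f σ * Real.log (f σ)) -
      ∑ σ, μ σ * (condMean μ f v σ * Real.log (condMean μ f v σ)) := by
  rw [sum_condMean_mul_log hμ, ← Finset.sum_sub_distrib]
  unfold avgEnt
  simp only [entropy_condDist_singleton]
  rw [sum_mul_fiberSum]
  refine Finset.sum_congr rfl fun σ _ => ?_
  by_cases hσ : μ σ = 0
  · simp [hσ]
  by_cases hfσ : f σ = 0
  · simp [hfσ]
  have hμf : ∀ τ, 0 ≤ μ τ * f τ := fun τ => mul_nonneg (hμ τ) (hf τ)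
  have hμpos := (hμ σ).lt_of_ne' hσ
  have hfpos := (hf σ).lt_of_ne' hfσ
  have hZ : 0 < fiberSum μ v σ := hμpos.trans_le (le_fiberSum hμ v σ)
  have hN : 0 < fiberSum (fun τ => μ τ * f τ) v σ :=
    (mul_pos hμpos hfpos).trans_le (le_fiberSum hμf v σ)
  have hm : 0 < condMean μ f v σ := div_pos hN hZ
  rw [mul_div_cancel₀ _ hZ.ne', Real.log_div hfσ hm.ne']
  ring

end

/-- **Entropy decay of the Glauber dynamics from approximate tensorization:** if `μ`
satisfies approximate tensorization of entropy with constant `C₁ > 0`, then one step of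
the Glauber dynamics contracts the relative entropy with respect to `μ` by a factor
`1 − 1/(C₁·n)`. -/
theorem kl_contraction_of_approx_tensorization
    {V : Type} [Fintype V] [DecidableEq V] {q : ℕ} (hq : 2 ≤ q)
    (μ : (V → Fin q) → ℝ) (hμprob : IsProbDist μ)
    (C₁ : ℝ) (hC₁ : 0 < C₁) (hat : ApproxTensorization μ C₁)
    (ν : (V → Fin q) → ℝ) (hνprob : IsProbDist ν)
    (hsupp : ∀ σ, μ σ = 0 → ν σ = 0) :
    klDiv (fun σ' => ∑ σ, ν σ * glauberMatrix μ σ σ') μ ≤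
      (1 - 1 / (C₁ * (Fintype.card V : ℝ))) * klDiv ν μ := by
  classical
  obtain ⟨hμ, hμ1⟩ := hμprob
  obtain ⟨hν, hν1⟩ := hνprob
  obtain ⟨f, hf, rfl⟩ : ∃ f : (V → Fin q) → ℝ, (∀ σ, 0 ≤ f σ) ∧ ν = fun σ => μ σ * f σ := by
    refine ⟨fun σ => ν σ / μ σ, fun σ => div_nonneg (hν σ) (hμ σ), funext fun σ => ?_⟩
    by_cases h : μ σ = 0
    · simp [h, hsupp σ h]
    · field_simp
  simp only [sum_mul_glauberMatrix]
  rw [klDiv_mul_left, klDiv_mul_left]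
  set E := ∑ σ, μ σ * (f σ * Real.log (f σ)) with hE
  rcases isEmpty_or_nonempty V with hV | hV
  ·
    -- With no vertices there is a single configuration, so `f = 1` and both sides vanish.
    have hμ1' : μ default = 1 := by simpa using hμ1
    have hf1 : f default = 1 := by simpa [hμ1'] using hν1
    have hE0 : E = 0 := by
      rw [hE, Fintype.sum_unique]
      simp [hf1]
    simp [hE0]
  have hn : (0 : ℝ) < Fintype.card V := by exact_mod_cast Fintype.card_pos
  have hent : entropy μ f = E := by
    have : expec μ f = 1 := hν1
    unfold entropy
    rw [this, hE]
    exact Finset.sum_congr rfl fun σ _ => by rw [div_one, mul_assoc]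
  have htens := hat f hf
  rw [hent, Finset.sum_congr rfl fun v _ => avgEnt_singleton hμ hf v] at htens
  have hcm : ∀ v σ, 0 ≤ condMean μ f v σ := fun v σ =>
    div_nonneg (fiberSum_nonneg (fun τ => mul_nonneg (hμ τ) (hf τ)) v σ) (fiberSum_nonneg hμ v σ)
  have hjensen : ∀ σ, (∑ v : V, (Fintype.card V : ℝ)⁻¹ * condMean μ f v σ) *
      Real.log (∑ v : V, (Fintype.card V : ℝ)⁻¹ * condMean μ f v σ) ≤
      ∑ v : V, (Fintype.card V : ℝ)⁻¹ * (condMean μ f v σ * Real.log (condMean μ f v σ)) := by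
    intro σ
    exact Real.convexOn_mul_log.map_sum_le (t := Finset.univ)
      (w := fun _ : V => (Fintype.card V : ℝ)⁻¹) (p := fun v => condMean μ f v σ)
      (fun _ _ => (inv_pos.2 hn).le) (by simp [hn.ne']) (fun v _ => hcm v σ)
  have hstep := Finset.sum_le_sum fun σ (_ : σ ∈ Finset.univ) =>
    mul_le_mul_of_nonneg_left (hjensen σ) (hμ σ)
  refine hstep.trans ?_
  set S := ∑ v : V, ∑ σ, μ σ * (condMean μ f v σ * Real.log (condMean μ f v σ)) with hS
  have hswap : ∑ σ, μ σ * ∑ v : V, (Fintype.card V : ℝ)⁻¹ *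
      (condMean μ f v σ * Real.log (condMean μ f v σ)) = (Fintype.card V : ℝ)⁻¹ * S := by
    rw [hS]
    simp only [Finset.mul_sum]
    rw [Finset.sum_comm]
    exact Finset.sum_congr rfl fun v _ => Finset.sum_congr rfl fun σ _ => by ring
  rw [hswap]
  rw [Finset.sum_sub_distrib, Finset.sum_const, Finset.card_univ, nsmul_eq_mul] at htens
  have hdiv : E / C₁ ≤ (Fintype.card V : ℝ) * E - S := by
    rw [div_le_iff₀ hC₁]
    linarith
  have : (1 - 1 / (C₁ * (Fintype.card V : ℝ))) * E =
      (Fintype.card V : ℝ)⁻¹ * ((Fintype.card V : ℝ) * E - E / C₁) := by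
    field_simp
  rw [this]
  exact mul_le_mul_of_nonneg_left (by linarith) (inv_pos.2 hn).le
end
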